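/- arXiv:1812.09498 — 6 statements merged into one kernel-verified Lean document; each statement's English description precedes it below -/
import Mathlib

section
/- Let u ∈ C²([a,b]) be a solution of the straight BVP. Then u is strictly increasing and convex on [a,b]; more precisely, u'(x) > 0 for every x ∈ [a,b] and u''(x) ≥ 0 for every x ∈ [a,b]. -/
open Set Filter

noncomputable section

/-- Partial derivative of a two-argument function with respect to its first argument. -/
def pd1 (f : ℝ → ℝ → ℝ) (u x : ℝ) : ℝ := deriv (fun t => f t x) u

/-- Partial derivative of a two-argument function with respect to its second argument. -/
def pd2 (f : ℝ → ℝ → ℝ) (u x : ℝ) : ℝ := deriv (fun s => f u s) x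

/-- The nonlinearity `𝒩(u,x) = N(u,x)·u`. -/
def Ncal (N : ℝ → ℝ → ℝ) (u x : ℝ) : ℝ := N u x * u

/-- `u` is twice continuously differentiable on `s`, with first derivative `u'`
and second derivative `u''` (derivatives within `s`). -/
def IsC2On (u u' u'' : ℝ → ℝ) (s : Set ℝ) : Prop :=
  (∀ x ∈ s, HasDerivWithinAt u (u' x) s x) ∧
  (∀ x ∈ s, HasDerivWithinAt u' (u'' x) s x) ∧
  ContinuousOn u'' s

/-- The straight boundary value problem: `u ∈ C²([a,b])`, `u'' = 𝒩(u(x),x)` on `[a,b]`,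
`u(a) = 0`, `u(b) = ub`. -/
def IsStraightBVP (N : ℝ → ℝ → ℝ) (a b ub : ℝ) (u u' u'' : ℝ → ℝ) : Prop :=
  IsC2On u u' u'' (Icc a b) ∧
  (∀ x ∈ Icc a b, u'' x = Ncal N (u x) x) ∧
  u a = 0 ∧ u b = ub

/-!
Along a solution, `q x = N (u x) x` turns the problem into the linear equation `u'' = q u` with
`0 ≤ q ≤ K` on `[a, b]`. Then `(u u')' = u' ^ 2 + q u ^ 2 ≥ 0`, so `u u' ≥ 0` and `u ^ 2` is
monotone: once `u` is negative it cannot return to `0`, hence `u ≥ 0` because `u b > 0`. It follows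
that `u'' ≥ 0`, so `u' ≥ u' a`, and it remains to exclude `u' a ≤ 0`. With `L ^ 2 ≥ K` we have
`u'' ≤ L ^ 2 u`; the factorization `D ^ 2 - L ^ 2 = (D - L) (D + L)` and two applications of
Grönwall's inequality would then give `u ≤ 0`, contradicting `u b > 0`.
-/

section Calculus

variable {a b : ℝ} {s : Set ℝ} {f f' f'' : ℝ → ℝ}

lemma hasDerivWithinAt_interior (hf : ∀ x ∈ s, HasDerivWithinAt f (f' x) s x) :
    ∀ x ∈ interior s, HasDerivWithinAt f (f' x) (interior s) x :=
  fun x hx => (hf x (interior_subset hx)).mono interior_subset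

lemma monotoneOn_of_forall_hasDerivWithinAt_nonneg (hs : Convex ℝ s)
    (hf : ∀ x ∈ s, HasDerivWithinAt f (f' x) s x) (hf' : ∀ x ∈ s, 0 ≤ f' x) :
    MonotoneOn f s :=
  monotoneOn_of_hasDerivWithinAt_nonneg hs (HasDerivWithinAt.continuousOn hf)
    (hasDerivWithinAt_interior hf) fun x hx => hf' x (interior_subset hx)

lemma nonpos_of_hasDerivWithinAt_le_mul {L : ℝ}
    (hf : ∀ x ∈ Icc a b, HasDerivWithinAt f (f' x) (Icc a b) x)
    (hle : ∀ x ∈ Icc a b, f' x ≤ L * f x) (ha : f a ≤ 0) :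
    ∀ x ∈ Icc a b, f x ≤ 0 := by
  intro x hx
  have hright : ∀ y ∈ Ico a b, HasDerivWithinAt f (f' y) (Ici y) y := fun y hy =>
    (hf y (Ico_subset_Icc_self hy)).mono_of_mem_nhdsWithin (Icc_mem_nhdsGE_of_mem hy)
  have hbound := le_gronwallBound_of_liminf_deriv_right_le (K := L) (ε := 0)
    (HasDerivWithinAt.continuousOn hf)
    (fun y hy _ hr => (hright y hy).liminf_right_slope_le hr) ha
    (fun y hy => by simpa only [add_zero] using hle y (Ico_subset_Icc_self hy)) x hx
  rwa [gronwallBound_ε0_δ0] at hbound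

lemma nonpos_of_hasDerivWithinAt2_le_sq_mul {L : ℝ}
    (hf : ∀ x ∈ Icc a b, HasDerivWithinAt f (f' x) (Icc a b) x)
    (hf' : ∀ x ∈ Icc a b, HasDerivWithinAt f' (f'' x) (Icc a b) x)
    (hle : ∀ x ∈ Icc a b, f'' x ≤ L ^ 2 * f x) (ha : f a ≤ 0) (ha' : f' a + L * f a ≤ 0) :
    ∀ x ∈ Icc a b, f x ≤ 0 := by
  have hfactor : ∀ x ∈ Icc a b, f' x + L * f x ≤ 0 :=
    nonpos_of_hasDerivWithinAt_le_mul (L := L)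
      (fun x hx => (hf' x hx).add ((hf x hx).const_mul L))
      (fun x hx => by linear_combination hle x hx) ha'
  exact nonpos_of_hasDerivWithinAt_le_mul (L := -L) hf
    (fun x hx => by linear_combination hfactor x hx) ha

lemma monotoneOn_sq_of_mul_hasDerivWithinAt2_nonneg
    (hf : ∀ x ∈ Icc a b, HasDerivWithinAt f (f' x) (Icc a b) x)
    (hf' : ∀ x ∈ Icc a b, HasDerivWithinAt f' (f'' x) (Icc a b) x)
    (hmul : ∀ x ∈ Icc a b, 0 ≤ f x * f'' x) (ha : 0 ≤ f a * f' a) :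
    MonotoneOn (fun x => f x ^ 2) (Icc a b) := by
  have hmono : MonotoneOn (fun x => f x * f' x) (Icc a b) :=
    monotoneOn_of_forall_hasDerivWithinAt_nonneg (convex_Icc a b)
      (fun x hx => (hf x hx).mul (hf' x hx))
      (fun x hx => add_nonneg (mul_self_nonneg (f' x)) (hmul x hx))
  have hnonneg : ∀ x ∈ Icc a b, 0 ≤ f x * f' x := fun x hx =>
    ha.trans (hmono (left_mem_Icc.2 (hx.1.trans hx.2)) hx hx.1)
  refine monotoneOn_of_forall_hasDerivWithinAt_nonneg (f' := fun x => 2 * (f x * f' x))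
    (convex_Icc a b) (fun x hx => ((hf x hx).pow 2).congr_deriv (by ring)) fun x hx => ?_
  exact mul_nonneg zero_le_two (hnonneg x hx)

lemma nonneg_of_monotoneOn_sq (hf : ContinuousOn f (Icc a b))
    (hmono : MonotoneOn (fun x => f x ^ 2) (Icc a b)) (hb : 0 ≤ f b) :
    ∀ x ∈ Icc a b, 0 ≤ f x := by
  intro x hx
  by_contra! hneg
  obtain ⟨z, hz, hz0⟩ :=
    intermediate_value_Icc hx.2 (hf.mono (Icc_subset_Icc_left hx.1)) ⟨hneg.le, hb⟩
  have hsq : f x ^ 2 ≤ f z ^ 2 := hmono hx ⟨hx.1.trans hz.1, hz.2⟩ hz.1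
  rw [hz0, zero_pow two_ne_zero] at hsq
  exact (sq_pos_of_neg hneg).not_ge hsq

lemma deriv_left_pos_of_hasDerivWithinAt2_le_mul {K : ℝ} (hab : a ≤ b)
    (hf : ∀ x ∈ Icc a b, HasDerivWithinAt f (f' x) (Icc a b) x)
    (hf' : ∀ x ∈ Icc a b, HasDerivWithinAt f' (f'' x) (Icc a b) x)
    (hle : ∀ x ∈ Icc a b, f'' x ≤ K * f x) (hnonneg : ∀ x ∈ Icc a b, 0 ≤ f x)
    (ha : f a = 0) (hb : 0 < f b) : 0 < f' a := by
  by_contra! ha'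
  have hsq : ∀ x ∈ Icc a b, f'' x ≤ √|K| ^ 2 * f x := fun x hx => by
    rw [Real.sq_sqrt (abs_nonneg K)]
    exact (hle x hx).trans (mul_le_mul_of_nonneg_right (le_abs_self K) (hnonneg x hx))
  have hfb : f b ≤ 0 := nonpos_of_hasDerivWithinAt2_le_sq_mul hf hf' hsq ha.le
    (by simpa only [ha, mul_zero, add_zero] using ha') b (right_mem_Icc.2 hab)
  exact hb.not_ge hfb

lemma deriv_pos_of_hasDerivWithinAt2_nonneg_of_le_mul {K : ℝ}
    (hf : ∀ x ∈ Icc a b, HasDerivWithinAt f (f' x) (Icc a b) x)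
    (hf' : ∀ x ∈ Icc a b, HasDerivWithinAt f' (f'' x) (Icc a b) x)
    (hf'' : ∀ x ∈ Icc a b, 0 ≤ f'' x) (hle : ∀ x ∈ Icc a b, f'' x ≤ K * f x)
    (hnonneg : ∀ x ∈ Icc a b, 0 ≤ f x) (ha : f a = 0) (hb : 0 < f b) :
    ∀ x ∈ Icc a b, 0 < f' x := by
  intro x hx
  have hab : a ≤ b := hx.1.trans hx.2
  calc 0 < f' a := deriv_left_pos_of_hasDerivWithinAt2_le_mul hab hf hf' hle hnonneg ha hb
    _ ≤ f' x := monotoneOn_of_forall_hasDerivWithinAt_nonneg (convex_Icc a b) hf' hf''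
        (left_mem_Icc.2 hab) hx hx.1

end Calculus

lemma nonneg_of_monotone_mul_self {R : Type*} [Ring R] [LinearOrder R] [IsStrictOrderedRing R]
    {g : R → R} (hg : Monotone fun t => g t * t) {t : R} (ht : t ≠ 0) : 0 ≤ g t := by
  rcases ht.lt_or_gt with hneg | hpos
  · have : g t * t ≤ 0 := by simpa only [mul_zero] using hg hneg.le
    exact nonneg_of_mul_nonpos_left this hneg
  · have : 0 ≤ g t * t := by simpa only [mul_zero] using hg hpos.le
    exact nonneg_of_mul_nonneg_left this hpos

lemma nonneg_of_pd1_Ncal_nonneg {N : ℝ → ℝ → ℝ} {x : ℝ} (hN : Differentiable ℝ fun t => N t x)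
    (hpd : ∀ t, 0 ≤ pd1 (Ncal N) t x) {t : ℝ} (ht : t ≠ 0) : 0 ≤ N t x := by
  have hmono : Monotone fun t => Ncal N t x :=
    monotone_of_deriv_nonneg (hN.mul differentiable_id) hpd
  exact nonneg_of_monotone_mul_self hmono ht

theorem straightBVP_strictMono_convex_general {a b ub : ℝ} (hub : 0 < ub) {N : ℝ → ℝ → ℝ}
    (hN : ContinuousOn (Function.uncurry N) (univ ×ˢ Icc a b))
    (hN_nonneg : ∀ t, ∀ x ∈ Icc a b, 0 ≤ N t x) {u u' u'' : ℝ → ℝ}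
    (hu : IsStraightBVP N a b ub u u' u'') :
    StrictMonoOn u (Icc a b) ∧ ConvexOn ℝ (Icc a b) u ∧
      (∀ x ∈ Icc a b, 0 < u' x) ∧ (∀ x ∈ Icc a b, 0 ≤ u'' x) := by
  obtain ⟨⟨hu₁, hu₂, -⟩, heq, ha, rfl⟩ := hu
  have hcont : ContinuousOn u (Icc a b) := HasDerivWithinAt.continuousOn hu₁
  have hmul : ∀ x ∈ Icc a b, 0 ≤ u x * u'' x := fun x hx => by
    rw [heq x hx, Ncal, mul_left_comm]
    exact mul_nonneg (hN_nonneg (u x) x hx) (mul_self_nonneg (u x))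
  have hu_nonneg : ∀ x ∈ Icc a b, 0 ≤ u x := nonneg_of_monotoneOn_sq hcont
    (monotoneOn_sq_of_mul_hasDerivWithinAt2_nonneg hu₁ hu₂ hmul (by rw [ha, zero_mul])) hub.le
  have hu''_nonneg : ∀ x ∈ Icc a b, 0 ≤ u'' x := fun x hx =>
    heq x hx ▸ mul_nonneg (hN_nonneg (u x) x hx) (hu_nonneg x hx)
  obtain ⟨K, hK⟩ : BddAbove ((fun x => N (u x) x) '' Icc a b) := isCompact_Icc.bddAbove_image
    (hN.comp (hcont.prodMk continuousOn_id) fun x hx => ⟨mem_univ (u x), hx⟩)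
  have hle : ∀ x ∈ Icc a b, u'' x ≤ K * u x := fun x hx =>
    heq x hx ▸ mul_le_mul_of_nonneg_right (hK (mem_image_of_mem _ hx)) (hu_nonneg x hx)
  have hu'_pos : ∀ x ∈ Icc a b, 0 < u' x :=
    deriv_pos_of_hasDerivWithinAt2_nonneg_of_le_mul hu₁ hu₂ hu''_nonneg hle hu_nonneg ha hub
  exact ⟨strictMonoOn_of_hasDerivWithinAt_pos (convex_Icc a b) hcont
      (hasDerivWithinAt_interior hu₁) fun x hx => hu'_pos x (interior_subset hx),
    convexOn_of_hasDerivWithinAt2_nonneg (convex_Icc a b) hcont (hasDerivWithinAt_interior hu₁)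
      (hasDerivWithinAt_interior hu₂) fun x hx => hu''_nonneg x (interior_subset hx),
    hu'_pos, hu''_nonneg⟩

/-- a solution of the straight BVP is strictly increasing and convex on `[a,b]`;
more precisely `u' > 0` and `u'' ≥ 0` on `[a,b]`. -/
theorem straightBVP_strictMono_convex
    (a b ub : ℝ) (hab : a < b) (hub : 0 < ub)
    (N : ℝ → ℝ → ℝ) (hN : ContDiff ℝ 1 (Function.uncurry N))
    (hC1 : ∀ t : ℝ, ∀ x ∈ Icc a b, 0 ≤ pd1 (Ncal N) t x)
    (hC2 : ∀ t : ℝ, 0 ≤ t → ∀ x ∈ Icc a b, 0 ≤ N t x)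
    (u u' u'' : ℝ → ℝ)
    (hu : IsStraightBVP N a b ub u u' u'') :
    StrictMonoOn u (Icc a b) ∧ ConvexOn ℝ (Icc a b) u ∧
      (∀ x ∈ Icc a b, 0 < u' x) ∧ (∀ x ∈ Icc a b, 0 ≤ u'' x) := by
  refine straightBVP_strictMono_convex_general hub hN.continuous.continuousOn (fun t x hx => ?_) hu
  exact (le_or_gt 0 t).elim (hC2 t · x hx) fun ht =>
    nonneg_of_pd1_Ncal_nonneg (by fun_prop) (hC1 · x hx) ht.ne
end
end

section
/- Let x* ∈ C²([0,u_b]) satisfy x*''(u) = −𝒩(u, x*(u))·(x*'(u))³ for all u ∈ [0,u_b]. Then 1 + 2·x*'(0)²·∫₀^η 𝒩(ξ, x*(ξ)) dξ > 0 for every η ∈ [0,u_b], and for every u ∈ [0,u_b] one has the representation x*(u) = x*(0) + ∫₀^u x*'(0) / √(1 + 2·x*'(0)²·∫₀^η 𝒩(ξ, x*(ξ)) dξ) dη. -/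
open Set Filter

noncomputable section

/-! The derivative `v = x*'` solves the Bernoulli equation `v' = -g vⁿ⁺¹` with `n = 2` and
`g(u) = 𝒩(u, x*(u))`. Read as the linear equation `v' = -(g vⁿ) v`, it gives `E v = v(a)` for the
integrating factor `E = exp ∫ g vⁿ`. Then `(Eⁿ)' = n g (E v)ⁿ = n v(a)ⁿ g`, so
`Eⁿ = 1 + n v(a)ⁿ ∫ g`. This route divides only by the positive `E`, whereas the substitution
`w = v⁻ⁿ` would require `v ≠ 0`. -/

section Calculus

variable {E : Type*} [NormedAddCommGroup E] [NormedSpace ℝ E] {a b : ℝ}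

theorem eqOn_Icc_of_hasDerivWithinAt {f g f' : ℝ → E}
    (hf : ∀ u ∈ Icc a b, HasDerivWithinAt f (f' u) (Icc a b) u)
    (hg : ∀ u ∈ Icc a b, HasDerivWithinAt g (f' u) (Icc a b) u) (ha : f a = g a) :
    EqOn f g (Icc a b) :=
  have deriv_right {h : ℝ → E} (hh : ∀ u ∈ Icc a b, HasDerivWithinAt h (f' u) (Icc a b) u) :
      ∀ u ∈ Ico a b, HasDerivWithinAt h (f' u) (Ici u) u := fun u hu =>
    (hh u (Ico_subset_Icc_self hu)).mono_of_mem_nhdsWithin (Icc_mem_nhdsGE_of_mem hu)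
  eq_of_has_deriv_right_eq (deriv_right hf) (deriv_right hg)
    (fun u hu => (hf u hu).continuousWithinAt) (fun u hu => (hg u hu).continuousWithinAt) ha

theorem hasDerivWithinAt_integral_Icc [CompleteSpace E] {f : ℝ → E}
    (hf : ContinuousOn f (Icc a b)) {u : ℝ} (hu : u ∈ Icc a b) :
    HasDerivWithinAt (fun t => ∫ s in a..t, f s) (f u) (Icc a b) u :=
  -- The instance giving the within-`Icc a b` version of the fundamental theorem reads this `Fact`.
  have : Fact (u ∈ Icc a b) := ⟨hu⟩
  intervalIntegral.integral_hasDerivWithinAt_right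
    ((hf.mono (Icc_subset_Icc_right hu.2)).intervalIntegrable_of_Icc hu.1)
    (hf.stronglyMeasurableAtFilter_nhdsWithin measurableSet_Icc u) (hf u hu)

theorem exp_integral_smul_eq_of_hasDerivWithinAt {h : ℝ → ℝ} {v : ℝ → E}
    (hh : ContinuousOn h (Icc a b))
    (hv : ∀ u ∈ Icc a b, HasDerivWithinAt v (-h u • v u) (Icc a b) u) {u : ℝ}
    (hu : u ∈ Icc a b) : Real.exp (∫ s in a..u, h s) • v u = v a := by
  refine eqOn_Icc_of_hasDerivWithinAt (f := fun t => Real.exp (∫ s in a..t, h s) • v t)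
    (g := fun _ => v a) (fun t ht => ?_)
    (fun t _ => hasDerivWithinAt_const t _ (v a)) (by simp) hu
  refine ((hasDerivWithinAt_integral_Icc hh ht).exp.smul (hv t ht)).congr_deriv ?_
  module

end Calculus

section Bernoulli

variable {a b u : ℝ} {g v : ℝ → ℝ}

theorem bernoulli_exp_integral_mul_eq {n : ℕ} (hg : ContinuousOn g (Icc a b))
    (hv : ∀ t ∈ Icc a b, HasDerivWithinAt v (-g t * v t ^ (n + 1)) (Icc a b) t)
    (hu : u ∈ Icc a b) : Real.exp (∫ s in a..u, g s * v s ^ n) * v u = v a :=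
  have hvc : ContinuousOn v (Icc a b) := fun t ht => (hv t ht).continuousWithinAt
  exp_integral_smul_eq_of_hasDerivWithinAt (h := fun t => g t * v t ^ n) (hg.mul (hvc.pow n))
    (fun t ht => (hv t ht).congr_deriv (by rw [smul_eq_mul]; ring)) hu

theorem bernoulli_exp_integral_pow_eq {n : ℕ} (hg : ContinuousOn g (Icc a b))
    (hv : ∀ t ∈ Icc a b, HasDerivWithinAt v (-g t * v t ^ (n + 1)) (Icc a b) t)
    (hu : u ∈ Icc a b) :
    Real.exp (∫ s in a..u, g s * v s ^ n) ^ n = 1 + n * v a ^ n * ∫ s in a..u, g s := by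
  have hvc : ContinuousOn v (Icc a b) := fun t ht => (hv t ht).continuousWithinAt
  set H : ℝ → ℝ := fun t => ∫ s in a..t, g s * v s ^ n
  have hH : ∀ t ∈ Icc a b, HasDerivWithinAt H (g t * v t ^ n) (Icc a b) t := fun t ht =>
    hasDerivWithinAt_integral_Icc (hg.mul (hvc.pow n)) ht
  have hexp : ∀ t ∈ Icc a b,
      HasDerivWithinAt (fun t => Real.exp (H t) ^ n) (n * v a ^ n * g t) (Icc a b) t := by
    intro t ht
    have hEv : Real.exp (H t) * v t = v a := bernoulli_exp_integral_mul_eq hg hv ht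
    simp only [← Real.exp_nat_mul]
    refine ((hH t ht).const_mul (n : ℝ)).exp.congr_deriv ?_
    rw [Real.exp_nat_mul, ← hEv]
    ring
  exact eqOn_Icc_of_hasDerivWithinAt hexp
    (fun t ht => ((hasDerivWithinAt_integral_Icc hg ht).const_mul (n * v a ^ n)).const_add 1)
    (by simp [H]) hu

theorem bernoulli_cubic_pos (hg : ContinuousOn g (Icc a b))
    (hv : ∀ t ∈ Icc a b, HasDerivWithinAt v (-g t * v t ^ 3) (Icc a b) t) (hu : u ∈ Icc a b) :
    0 < 1 + 2 * v a ^ 2 * ∫ s in a..u, g s := by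
  have hE := bernoulli_exp_integral_pow_eq (n := 2) hg hv hu
  push_cast at hE
  rw [← hE]
  positivity

theorem bernoulli_cubic_eq_div_sqrt (hg : ContinuousOn g (Icc a b))
    (hv : ∀ t ∈ Icc a b, HasDerivWithinAt v (-g t * v t ^ 3) (Icc a b) t) (hu : u ∈ Icc a b) :
    v u = v a / Real.sqrt (1 + 2 * v a ^ 2 * ∫ s in a..u, g s) := by
  have hE := bernoulli_exp_integral_pow_eq (n := 2) hg hv hu
  push_cast at hE
  rw [← hE, Real.sqrt_sq (Real.exp_nonneg _), eq_div_iff (Real.exp_ne_zero _), mul_comm]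
  exact bernoulli_exp_integral_mul_eq hg hv hu

end Bernoulli

theorem continuousOn_ncal {N : ℝ → ℝ → ℝ} (hN : Continuous (Function.uncurry N)) {x : ℝ → ℝ}
    {s : Set ℝ} (hx : ContinuousOn x s) : ContinuousOn (fun u => Ncal N u (x u)) s :=
  (hN.comp_continuousOn (continuousOn_id.prodMk hx)).mul continuousOn_id

theorem inverse_equation_integral_representation_general {a b : ℝ} {g x x' : ℝ → ℝ}
    (hg : ContinuousOn g (Icc a b))
    (hx : ∀ u ∈ Icc a b, HasDerivWithinAt x (x' u) (Icc a b) u)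
    (hx' : ∀ u ∈ Icc a b, HasDerivWithinAt x' (-g u * x' u ^ 3) (Icc a b) u) :
    (∀ η ∈ Icc a b, 0 < 1 + 2 * x' a ^ 2 * ∫ ξ in a..η, g ξ) ∧
    (∀ u ∈ Icc a b,
      x u = x a + ∫ η in a..u, x' a / Real.sqrt (1 + 2 * x' a ^ 2 * ∫ ξ in a..η, g ξ)) := by
  refine ⟨fun η hη => bernoulli_cubic_pos hg hx' hη, fun u hu => ?_⟩
  set w : ℝ → ℝ := fun η => x' a / Real.sqrt (1 + 2 * x' a ^ 2 * ∫ ξ in a..η, g ξ)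
  have hx'w : EqOn x' w (Icc a b) := fun η hη => bernoulli_cubic_eq_div_sqrt hg hx' hη
  have hw : ContinuousOn w (Icc a b) :=
    ContinuousOn.congr (fun η hη => (hx' η hη).continuousWithinAt) hx'w.symm
  exact eqOn_Icc_of_hasDerivWithinAt (fun η hη => (hx η hη).congr_deriv (hx'w hη))
    (fun η hη => (hasDerivWithinAt_integral_Icc hw hη).const_add (x a)) (by simp) hu

/-- the Bernoulli-type integral representation of a solution of the
inverse equation `x*'' = −𝒩(u, x*(u))·(x*'(u))³` on `[0, u_b]`. -/
theorem inverse_equation_integral_representation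
    (ub : ℝ) (hub : 0 < ub)
    (N : ℝ → ℝ → ℝ) (hN : ContDiff ℝ 1 (Function.uncurry N))
    (xs xs' xs'' : ℝ → ℝ)
    (hx : IsC2On xs xs' xs'' (Icc 0 ub))
    (hode : ∀ u ∈ Icc (0:ℝ) ub, xs'' u = -(Ncal N u (xs u)) * (xs' u) ^ 3) :
    (∀ η ∈ Icc (0:ℝ) ub,
      0 < 1 + 2 * (xs' 0) ^ 2 * ∫ ξ in (0:ℝ)..η, Ncal N ξ (xs ξ)) ∧
    (∀ u ∈ Icc (0:ℝ) ub,
      xs u = xs 0 + ∫ η in (0:ℝ)..u,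
        xs' 0 / Real.sqrt (1 + 2 * (xs' 0) ^ 2 * ∫ ξ in (0:ℝ)..η, Ncal N ξ (xs ξ))) := by
  exact inverse_equation_integral_representation_general
    (continuousOn_ncal hN.continuous fun u hu => (hx.1 u hu).continuousWithinAt) hx.1
    fun u hu => (hx.2.1 u hu).congr_deriv (hode u hu)
end
end

section
/- Let x* ∈ C²([0,u_b]) satisfy x*''(u) = −𝒩(u, x*(u))·(x*'(u))³ for all u ∈ [0,u_b]. Then for every u ∈ [0,u_b] one has x*'(u) = x*'(0) / √(1 + 2·x*'(0)²·∫₀^u 𝒩(ξ, x*(ξ)) dξ). In particular, if x*'(0) = 0 then x*' vanishes identically, while if x*'(0) ≠ 0 then x*'(u) ≠ 0 for all u ∈ [0,u_b] and x*'(u) has the same sign as x*'(0). -/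
open Set Filter

noncomputable section

/-! The equation is a Bernoulli equation for the derivative `p` of `x*`. Read as the linear equation
`p' = (n pᵏ) p` with `k = 2` and `n = -𝒩`, it gives `p = e^I p(t₀)` where `I = ∫ n pᵏ`; in
particular `p` keeps its sign. Since `I' = n pᵏ = n p(t₀)ᵏ e^(kI)`, the derivative of `e^(-kI)` is
`-k p(t₀)ᵏ n`, which involves `p` only through its initial value. Integrating,
`e^(-kI) = 1 - k p(t₀)ᵏ ∫ n`: this is the radicand, so it is positive, and its root recovers `e^I`.
-/

section Calculus

variable {E : Type*} [NormedAddCommGroup E] [NormedSpace ℝ E]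

theorem eq_of_forall_hasDerivWithinAt_zero {f : ℝ → E} {s : Set ℝ} (hs : Convex ℝ s)
    (hf : ∀ x ∈ s, HasDerivWithinAt f 0 s x) {x y : ℝ} (hx : x ∈ s) (hy : y ∈ s) : f x = f y := by
  have hle : ‖f x - f y‖ ≤ 0 * ‖x - y‖ :=
    hs.norm_image_sub_le_of_norm_hasDerivWithin_le hf (fun _ _ => norm_zero.le) hy hx
  rw [zero_mul] at hle
  exact sub_eq_zero.1 (norm_le_zero_iff.1 hle)

theorem hasDerivWithinAt_integral_of_continuousOn_Icc [CompleteSpace E] {f : ℝ → E} {a b t₀ t : ℝ}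
    (hf : ContinuousOn f (Icc a b)) (ht₀ : t₀ ∈ Icc a b) (ht : t ∈ Icc a b) :
    HasDerivWithinAt (fun u => ∫ r in t₀..u, f r) (f t) (Icc a b) t :=
  have : Fact (t ∈ Icc a b) := ⟨ht⟩
  intervalIntegral.integral_hasDerivWithinAt_right
    (hf.mono (uIcc_subset_Icc ht₀ ht)).intervalIntegrable
    (hf.stronglyMeasurableAtFilter_nhdsWithin measurableSet_Icc t) (hf t ht)

theorem eq_exp_integral_smul_of_hasDerivWithinAt {q : ℝ → ℝ} {p : ℝ → E} {a b t₀ t : ℝ}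
    (hq : ContinuousOn q (Icc a b))
    (hp : ∀ u ∈ Icc a b, HasDerivWithinAt p (q u • p u) (Icc a b) u)
    (ht₀ : t₀ ∈ Icc a b) (ht : t ∈ Icc a b) :
    p t = Real.exp (∫ r in t₀..t, q r) • p t₀ := by
  have hderiv : ∀ u ∈ Icc a b,
      HasDerivWithinAt (fun u => Real.exp (-∫ r in t₀..u, q r) • p u) 0 (Icc a b) u := by
    intro u hu
    refine ((hasDerivWithinAt_integral_of_continuousOn_Icc hq ht₀ hu).fun_neg.exp.fun_smul
      (hp u hu)).congr_deriv ?_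
    module
  have hconst : Real.exp (-∫ r in t₀..t, q r) • p t = p t₀ := by
    simpa using eq_of_forall_hasDerivWithinAt_zero (convex_Icc a b) hderiv ht ht₀
  rw [← hconst, smul_smul, ← Real.exp_add, add_neg_cancel, Real.exp_zero, one_smul]

end Calculus

section Bernoulli

variable {n p : ℝ → ℝ} {k : ℕ} {a b t₀ t : ℝ}

theorem bernoulli_eq_exp_integral_mul (hn : ContinuousOn n (Icc a b))
    (hp : ∀ u ∈ Icc a b, HasDerivWithinAt p (n u * p u ^ (k + 1)) (Icc a b) u)
    (ht₀ : t₀ ∈ Icc a b) (ht : t ∈ Icc a b) :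
    p t = Real.exp (∫ r in t₀..t, n r * p r ^ k) * p t₀ := by
  have hpc : ContinuousOn p (Icc a b) := fun u hu => (hp u hu).continuousWithinAt
  refine eq_exp_integral_smul_of_hasDerivWithinAt (hn.mul (hpc.pow k)) (fun u hu => ?_) ht₀ ht
  exact (hp u hu).congr_deriv (by rw [smul_eq_mul, pow_succ, mul_assoc])

theorem bernoulli_exp_neg_mul_integral (hn : ContinuousOn n (Icc a b))
    (hp : ∀ u ∈ Icc a b, HasDerivWithinAt p (n u * p u ^ (k + 1)) (Icc a b) u)
    (ht₀ : t₀ ∈ Icc a b) (ht : t ∈ Icc a b) :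
    Real.exp (-(k * ∫ r in t₀..t, n r * p r ^ k)) = 1 - k * p t₀ ^ k * ∫ r in t₀..t, n r := by
  have hpc : ContinuousOn p (Icc a b) := fun u hu => (hp u hu).continuousWithinAt
  set I : ℝ → ℝ := fun u => ∫ r in t₀..u, n r * p r ^ k
  have hI : ∀ u ∈ Icc a b, HasDerivWithinAt I (n u * p u ^ k) (Icc a b) u := fun u hu =>
    hasDerivWithinAt_integral_of_continuousOn_Icc (hn.mul (hpc.pow k)) ht₀ hu
  have hcancel : ∀ u ∈ Icc a b, Real.exp (-(k * I u)) * p u ^ k = p t₀ ^ k := by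
    intro u hu
    rw [bernoulli_eq_exp_integral_mul hn hp ht₀ hu, mul_pow, ← Real.exp_nat_mul, ← mul_assoc,
      ← Real.exp_add, neg_add_cancel, Real.exp_zero, one_mul]
  have hderiv : ∀ u ∈ Icc a b, HasDerivWithinAt
      (fun u => Real.exp (-(k * I u)) + k * p t₀ ^ k * ∫ r in t₀..u, n r) 0 (Icc a b) u := by
    intro u hu
    refine (((hI u hu).const_mul (k : ℝ)).fun_neg.exp.fun_add
      ((hasDerivWithinAt_integral_of_continuousOn_Icc hn ht₀ hu).const_mul
        (k * p t₀ ^ k))).congr_deriv ?_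
    rw [← hcancel u hu]
    ring
  have hconst : Real.exp (-(k * I t)) + k * p t₀ ^ k * ∫ r in t₀..t, n r = 1 := by
    simpa [I] using eq_of_forall_hasDerivWithinAt_zero (convex_Icc a b) hderiv ht ht₀
  exact eq_sub_of_add_eq hconst

theorem bernoulli_one_sub_mul_integral_pos (hn : ContinuousOn n (Icc a b))
    (hp : ∀ u ∈ Icc a b, HasDerivWithinAt p (n u * p u ^ (k + 1)) (Icc a b) u)
    (ht₀ : t₀ ∈ Icc a b) (ht : t ∈ Icc a b) :
    0 < 1 - k * p t₀ ^ k * ∫ r in t₀..t, n r :=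
  bernoulli_exp_neg_mul_integral hn hp ht₀ ht ▸ Real.exp_pos _

theorem bernoulli_eq_div_rpow (hk : k ≠ 0) (hn : ContinuousOn n (Icc a b))
    (hp : ∀ u ∈ Icc a b, HasDerivWithinAt p (n u * p u ^ (k + 1)) (Icc a b) u)
    (ht₀ : t₀ ∈ Icc a b) (ht : t ∈ Icc a b) :
    p t = p t₀ / (1 - k * p t₀ ^ k * ∫ r in t₀..t, n r) ^ (1 / k : ℝ) := by
  have hk' : (k : ℝ) ≠ 0 := Nat.cast_ne_zero.2 hk
  rw [← bernoulli_exp_neg_mul_integral hn hp ht₀ ht, ← Real.exp_mul, neg_mul, mul_one_div,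
    mul_div_cancel_left₀ _ hk', Real.exp_neg, div_inv_eq_mul, mul_comm]
  exact bernoulli_eq_exp_integral_mul hn hp ht₀ ht

end Bernoulli

theorem inverse_equation_derivative_representation_general {a b t₀ : ℝ} (ht₀ : t₀ ∈ Icc a b)
    {N : ℝ → ℝ → ℝ} (hN : Continuous (Function.uncurry N)) {xs xs' : ℝ → ℝ}
    (hxs : ∀ u ∈ Icc a b, HasDerivWithinAt xs (xs' u) (Icc a b) u)
    (hode : ∀ u ∈ Icc a b,
      HasDerivWithinAt xs' (-(Ncal N u (xs u)) * (xs' u) ^ 3) (Icc a b) u) :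
    (∀ u ∈ Icc a b, 0 < 1 + 2 * (xs' t₀) ^ 2 * ∫ ξ in t₀..u, Ncal N ξ (xs ξ)) ∧
    (∀ u ∈ Icc a b,
      xs' u = xs' t₀ / Real.sqrt (1 + 2 * (xs' t₀) ^ 2 * ∫ ξ in t₀..u, Ncal N ξ (xs ξ))) ∧
    (xs' t₀ = 0 → ∀ u ∈ Icc a b, xs' u = 0) ∧
    (xs' t₀ ≠ 0 → ∀ u ∈ Icc a b, xs' u ≠ 0 ∧ 0 < xs' u * xs' t₀) := by
  have hxsc : ContinuousOn xs (Icc a b) := fun u hu => (hxs u hu).continuousWithinAt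
  have hn : ContinuousOn (fun u => -Ncal N u (xs u)) (Icc a b) :=
    ((hN.comp_continuousOn (continuousOn_id.prodMk hxsc)).mul continuousOn_id).neg
  have hpos : ∀ u ∈ Icc a b, 0 < 1 + 2 * (xs' t₀) ^ 2 * ∫ ξ in t₀..u, Ncal N ξ (xs ξ) :=
    fun u hu => by simpa using bernoulli_one_sub_mul_integral_pos (k := 2) hn hode ht₀ hu
  have hrep : ∀ u ∈ Icc a b,
      xs' u = xs' t₀ / Real.sqrt (1 + 2 * (xs' t₀) ^ 2 * ∫ ξ in t₀..u, Ncal N ξ (xs ξ)) :=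
    fun u hu => by
      simpa [Real.sqrt_eq_rpow] using bernoulli_eq_div_rpow two_ne_zero hn hode ht₀ hu
  refine ⟨hpos, hrep, fun h0 u hu => by rw [hrep u hu, h0, zero_div], fun h0 u hu => ?_⟩
  have hsign : 0 < xs' u * xs' t₀ := by
    rw [hrep u hu, div_mul_eq_mul_div]
    exact div_pos (mul_self_pos.2 h0) (Real.sqrt_pos.2 (hpos u hu))
  exact ⟨left_ne_zero_of_mul hsign.ne', hsign⟩

/-- representation of the derivative of a solution of the inverse equation,
with the sign consequences. -/
theorem inverse_equation_derivative_representation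
    (ub : ℝ) (hub : 0 < ub)
    (N : ℝ → ℝ → ℝ) (hN : ContDiff ℝ 1 (Function.uncurry N))
    (xs xs' xs'' : ℝ → ℝ)
    (hx : IsC2On xs xs' xs'' (Icc 0 ub))
    (hode : ∀ u ∈ Icc (0:ℝ) ub, xs'' u = -(Ncal N u (xs u)) * (xs' u) ^ 3) :
    (∀ u ∈ Icc (0:ℝ) ub,
      xs' u = xs' 0 / Real.sqrt (1 + 2 * (xs' 0) ^ 2 * ∫ ξ in (0:ℝ)..u, Ncal N ξ (xs ξ))) ∧
    (xs' 0 = 0 → ∀ u ∈ Icc (0:ℝ) ub, xs' u = 0) ∧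
    (xs' 0 ≠ 0 → ∀ u ∈ Icc (0:ℝ) ub, xs' u ≠ 0 ∧ 0 < xs' u * xs' 0) := by
  have hode' : ∀ u ∈ Icc 0 ub,
      HasDerivWithinAt xs' (-(Ncal N u (xs u)) * (xs' u) ^ 3) (Icc 0 ub) u :=
    fun u hu => hode u hu ▸ hx.2.1 u hu
  exact (inverse_equation_derivative_representation_general (left_mem_Icc.2 hub.le)
    hN.continuous hx.1 hode').2
end
end

section
/- Assume a ≠ b. Let x* ∈ C²([0,u_b]) satisfy x*''(u) = −𝒩(u, x*(u))·(x*'(u))³ for all u ∈ [0,u_b] together with the boundary conditions x*(0) = a and x*(u_b) = b. Then x*'(u) ≠ 0 for every u ∈ [0,u_b]; in particular x* is strictly monotone on [0,u_b]. -/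
open Set Filter

noncomputable section

/-!
Along a solution, `y = x*'` satisfies `|y'| ≤ g |y|` with `g u = |𝒩(u, x*(u)) (x*'(u))²|`
continuous. By Grönwall's inequality, run forwards and backwards, a zero of `y` anywhere would force
`y = 0` everywhere, making `x*` constant, against `a ≠ b`. A nowhere vanishing derivative has
constant sign by Darboux's theorem.
-/

section Gronwall

variable {E : Type*} [NormedAddCommGroup E] [NormedSpace ℝ E] {g : ℝ → ℝ} {y y' : ℝ → E}

theorem eqOn_zero_Icc_of_norm_deriv_le_mul_norm_of_eq_zero_left {p q : ℝ}
    (hg : ContinuousOn g (Icc p q))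
    (hy : ∀ t ∈ Icc p q, HasDerivWithinAt y (y' t) (Icc p q) t)
    (hbound : ∀ t ∈ Icc p q, ‖y' t‖ ≤ g t * ‖y t‖) (hp : y p = 0) :
    EqOn y 0 (Icc p q) := by
  obtain ⟨K, hK⟩ := isCompact_Icc.bddAbove_image hg
  refine eq_zero_of_abs_deriv_le_mul_abs_self_of_eq_zero_right (f' := y') (K := K)
    (HasDerivWithinAt.continuousOn hy) (fun t ht ↦ ?_) hp (fun t ht ↦ ?_)
  · exact (hy t (Ico_subset_Icc_self ht)).mono_of_mem_nhdsWithin (Icc_mem_nhdsGE_of_mem ht)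
  · have ht' : t ∈ Icc p q := Ico_subset_Icc_self ht
    exact (hbound t ht').trans (by gcongr; exact hK (mem_image_of_mem g ht'))

theorem eqOn_zero_Icc_of_norm_deriv_le_mul_norm_of_eq_zero_right {p q : ℝ}
    (hg : ContinuousOn g (Icc p q))
    (hy : ∀ t ∈ Icc p q, HasDerivWithinAt y (y' t) (Icc p q) t)
    (hbound : ∀ t ∈ Icc p q, ‖y' t‖ ≤ g t * ‖y t‖) (hq : y q = 0) :
    EqOn y 0 (Icc p q) := by
  have hneg : MapsTo Neg.neg (Icc (-q) (-p)) (Icc p q) := fun t ht ↦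
    ⟨le_neg_of_le_neg ht.2, neg_le_of_neg_le ht.1⟩
  have hzero : EqOn (y ∘ Neg.neg) 0 (Icc (-q) (-p)) :=
    eqOn_zero_Icc_of_norm_deriv_le_mul_norm_of_eq_zero_left (g := fun t ↦ g (-t))
      (y' := fun t ↦ -y' (-t)) (hg.comp continuousOn_neg hneg)
      (fun t ht ↦ by
        simpa only [neg_one_smul] using
          (hy (-t) (hneg ht)).scomp t (hasDerivWithinAt_neg t _) hneg)
      (fun t ht ↦ (norm_neg _).le.trans (hbound (-t) (hneg ht)))
      (by simpa only [Function.comp_apply, neg_neg] using hq)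
  intro t ht
  have hnt : -t ∈ Icc (-q) (-p) := ⟨neg_le_neg ht.2, neg_le_neg ht.1⟩
  simpa only [Function.comp_apply, neg_neg, Pi.zero_apply] using hzero hnt

theorem eqOn_zero_of_norm_deriv_le_mul_norm {s : Set ℝ} (hs : Convex ℝ s) (hg : ContinuousOn g s)
    (hy : ∀ t ∈ s, HasDerivWithinAt y (y' t) s t)
    (hbound : ∀ t ∈ s, ‖y' t‖ ≤ g t * ‖y t‖) {t₀ : ℝ} (ht₀ : t₀ ∈ s) (hzero : y t₀ = 0) :
    EqOn y 0 s := by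
  intro t ht
  rcases le_total t₀ t with h | h
  · have hsub : Icc t₀ t ⊆ s := hs.ordConnected.out ht₀ ht
    exact eqOn_zero_Icc_of_norm_deriv_le_mul_norm_of_eq_zero_left (hg.mono hsub)
      (fun r hr ↦ (hy r (hsub hr)).mono hsub) (fun r hr ↦ hbound r (hsub hr)) hzero
      (right_mem_Icc.mpr h)
  · have hsub : Icc t t₀ ⊆ s := hs.ordConnected.out ht ht₀
    exact eqOn_zero_Icc_of_norm_deriv_le_mul_norm_of_eq_zero_right (hg.mono hsub)
      (fun r hr ↦ (hy r (hsub hr)).mono hsub) (fun r hr ↦ hbound r (hsub hr)) hzero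
      (left_mem_Icc.mpr h)

theorem deriv_ne_zero_of_norm_deriv2_le_mul_norm_deriv {s : Set ℝ} (hs : Convex ℝ s)
    {x x' x'' : ℝ → E} (hg : ContinuousOn g s)
    (hx : ∀ u ∈ s, HasDerivWithinAt x (x' u) s u)
    (hx' : ∀ u ∈ s, HasDerivWithinAt x' (x'' u) s u)
    (hbound : ∀ u ∈ s, ‖x'' u‖ ≤ g u * ‖x' u‖)
    {p q : ℝ} (hp : p ∈ s) (hq : q ∈ s) (hpq : x p ≠ x q) :
    ∀ u ∈ s, x' u ≠ 0 := by
  intro u hu hzero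
  have hx'_zero : EqOn x' 0 s := eqOn_zero_of_norm_deriv_le_mul_norm hs hg hx' hbound hu hzero
  have hle : ‖x p - x q‖ ≤ 0 * ‖p - q‖ :=
    hs.norm_image_sub_le_of_norm_hasDerivWithin_le hx
      (fun t ht ↦ (norm_eq_zero.mpr (hx'_zero ht)).le) hq hp
  rw [zero_mul, norm_le_zero_iff, sub_eq_zero] at hle
  exact hpq hle

end Gronwall

theorem strictMonoOn_or_strictAntiOn_of_hasDerivWithinAt_ne_zero {s : Set ℝ} (hs : Convex ℝ s)
    {f f' : ℝ → ℝ} (hf : ∀ t ∈ s, HasDerivWithinAt f (f' t) s t) (hf' : ∀ t ∈ s, f' t ≠ 0) :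
    StrictMonoOn f s ∨ StrictAntiOn f s := by
  have hcont : ContinuousOn f s := HasDerivWithinAt.continuousOn hf
  have hint : ∀ t ∈ interior s, HasDerivWithinAt f (f' t) (interior s) t := fun t ht ↦
    (hf t (interior_subset ht)).mono interior_subset
  rcases hasDerivWithinAt_forall_lt_or_forall_gt_of_forall_ne hs hf hf' with hneg | hpos
  · exact .inr <| strictAntiOn_of_hasDerivWithinAt_neg hs hcont hint fun t ht ↦
      hneg t (interior_subset ht)
  · exact .inl <| strictMonoOn_of_hasDerivWithinAt_pos hs hcont hint fun t ht ↦
      hpos t (interior_subset ht)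

theorem inverse_BVP_deriv_ne_zero_general {s : Set ℝ} (hs : Convex ℝ s) {g x x' x'' : ℝ → ℝ}
    (hg : ContinuousOn g s)
    (hx : ∀ u ∈ s, HasDerivWithinAt x (x' u) s u)
    (hx' : ∀ u ∈ s, HasDerivWithinAt x' (x'' u) s u)
    (hbound : ∀ u ∈ s, |x'' u| ≤ g u * |x' u|)
    {p q : ℝ} (hp : p ∈ s) (hq : q ∈ s) (hpq : x p ≠ x q) :
    (∀ u ∈ s, x' u ≠ 0) ∧ (StrictMonoOn x s ∨ StrictAntiOn x s) :=
  have hne := deriv_ne_zero_of_norm_deriv2_le_mul_norm_deriv hs hg hx hx' hbound hp hq hpq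
  ⟨hne, strictMonoOn_or_strictAntiOn_of_hasDerivWithinAt_ne_zero hs hx hne⟩

theorem continuousOn_Ncal_mul_sq {N : ℝ → ℝ → ℝ} (hN : Continuous (Function.uncurry N))
    {s : Set ℝ} {x v : ℝ → ℝ} (hx : ContinuousOn x s) (hv : ContinuousOn v s) :
    ContinuousOn (fun u ↦ Ncal N u (x u) * v u ^ 2) s :=
  ((hN.comp_continuousOn (continuousOn_id.prodMk hx)).mul continuousOn_id).mul (hv.pow 2)

/-- a solution of the inverse BVP with `a ≠ b` has a nowhere vanishing
derivative on `[0, u_b]`; in particular it is strictly monotone there. -/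
theorem inverse_BVP_deriv_ne_zero
    (a b ub : ℝ) (hub : 0 < ub) (hab : a ≠ b)
    (N : ℝ → ℝ → ℝ) (hN : ContDiff ℝ 1 (Function.uncurry N))
    (xs xs' xs'' : ℝ → ℝ)
    (hx : IsC2On xs xs' xs'' (Icc 0 ub))
    (hode : ∀ u ∈ Icc (0:ℝ) ub, xs'' u = -(Ncal N u (xs u)) * (xs' u) ^ 3)
    (hx0 : xs 0 = a) (hxb : xs ub = b) :
    (∀ u ∈ Icc (0:ℝ) ub, xs' u ≠ 0) ∧
      (StrictMonoOn xs (Icc 0 ub) ∨ StrictAntiOn xs (Icc 0 ub)) :=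
  inverse_BVP_deriv_ne_zero_general (convex_Icc 0 ub)
    (continuousOn_Ncal_mul_sq hN.continuous (HasDerivWithinAt.continuousOn hx.1)
      (HasDerivWithinAt.continuousOn hx.2.1)).abs hx.1 hx.2.1
    (fun u hu ↦ by rw [hode u hu, neg_mul, abs_neg, ← abs_mul, mul_assoc, ← pow_succ])
    (left_mem_Icc.mpr hub.le) (right_mem_Icc.mpr hub.le) (by rwa [hx0, hxb])
end
end

section
/- Suppose u ∈ C²([a,b]) is a solution of the straight BVP. Then the inverse BVP has exactly one solution x ∈ C²([0,u_b]); this x is strictly increasing and is the inverse function of u, i.e. x(u(t)) = t for all t ∈ [a,b] and u(x(v)) = v for all v ∈ [0,u_b]. -/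
open Set Filter

noncomputable section

/-- The inverse BVP: `X ∈ C²([0,u_b])`, `X'' = −𝒩(v, X(v))·(X'(v))³` on `[0,u_b]`,
`X(0) = a`, `X(u_b) = b`. -/
def IsInverseBVP (N : ℝ → ℝ → ℝ) (a b ub : ℝ) (X X' X'' : ℝ → ℝ) : Prop :=
  IsC2On X X' X'' (Icc 0 ub) ∧
  (∀ v ∈ Icc (0:ℝ) ub, X'' v = -(Ncal N v (X v)) * (X' v) ^ 3) ∧
  X 0 = a ∧ X ub = b

/-!
Along a straight solution `u'' = N(u, x) u`, and `u u'' ≥ 0` because `𝒩(·, x)` is monotone and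
vanishes at `0`. Then `u u'` is nondecreasing, so a zero `c` of `u'` forces `u u' = 0`, hence
`u = 0`, on `[a, c]`; Grönwall's inequality spreads `u(c) = u'(c) = 0` to `u = 0` on `[a, b]`,
against `u(b) > 0`. So `u' > 0`, and differentiating the inverse of `u` twice gives the inverse
equation. Conversely an inverse solution `Y` satisfies `Y'' = r Y'` with `r` bounded, so `Y'` has
no zero and the inverse of `Y` solves the straight problem. The latter has at most one solution:
the difference `d` of two satisfies `d d'' ≥ 0` and vanishes at both ends.
-/

theorem continuousOn_of_invOn_of_isCompact {α β : Type*} [TopologicalSpace α] [TopologicalSpace β]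
    [T2Space β] {f : α → β} {g : β → α} {s : Set α} {t : Set β} (hs : IsCompact s)
    (hf : ContinuousOn f s) (hg : MapsTo g t s) (hinv : InvOn g f s t) : ContinuousOn g t := by
  rw [continuousOn_iff_isClosed]
  intro k hk
  refine ⟨f '' (s ∩ k),
    ((hs.inter_right hk).image_of_continuousOn (hf.mono inter_subset_left)).isClosed, ?_⟩
  ext y
  refine and_congr_left fun hy => ⟨fun hyk => ⟨g y, ⟨hg hy, hyk⟩, hinv.2 hy⟩, ?_⟩
  rintro ⟨x, ⟨hx, hxk⟩, rfl⟩
  rwa [mem_preimage, hinv.1 hx]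

theorem exists_strictMonoOn_invOn_Icc {α β : Type*} [ConditionallyCompleteLinearOrder α]
    [TopologicalSpace α] [OrderTopology α] [DenselyOrdered α] [LinearOrder β] [TopologicalSpace β]
    [OrderClosedTopology β] {f : α → β} {a b : α} (hab : a ≤ b)
    (hf : ContinuousOn f (Icc a b)) (hmono : StrictMonoOn f (Icc a b)) :
    ∃ g, StrictMonoOn g (Icc (f a) (f b)) ∧ MapsTo g (Icc (f a) (f b)) (Icc a b) ∧
      InvOn g f (Icc a b) (Icc (f a) (f b)) := by
  have : Nonempty α := ⟨a⟩
  have hsurj : SurjOn f (Icc a b) (Icc (f a) (f b)) := intermediate_value_Icc hab hf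
  have hmaps := hsurj.mapsTo_invFunOn
  have hright := hsurj.rightInvOn_invFunOn
  refine ⟨Function.invFunOn f (Icc a b), fun v hv w hw hvw => ?_, hmaps,
    hmono.injOn.leftInvOn_invFunOn, hright⟩
  rwa [← hmono.lt_iff_lt (hmaps hv) (hmaps hw), hright hv, hright hw]

theorem hasDerivWithinAt_of_rightInvOn {𝕜 : Type*} [NontriviallyNormedField 𝕜] {f g : 𝕜 → 𝕜}
    {f' y : 𝕜} {s t : Set 𝕜} (hg : ContinuousWithinAt g t y) (hmaps : MapsTo g t s)
    (hf : HasDerivWithinAt f f' s (g y)) (hf' : f' ≠ 0) (hy : y ∈ t) (hfg : RightInvOn g f t) :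
    HasDerivWithinAt g f'⁻¹ t y := by
  have hf_equiv : HasFDerivWithinAt f
      (ContinuousLinearEquiv.unitsEquivAut 𝕜 (Units.mk0 f' hf') : 𝕜 →L[𝕜] 𝕜) s (g y) := hf
  exact hf_equiv.of_local_left_inverse (hg.tendsto_nhdsWithin hmaps) hy
    (eventually_nhdsWithin_of_forall fun _ hw => hfg hw)

theorem eqOn_zero_of_norm_deriv_le_mul_norm_s5 {E : Type*} [NormedAddCommGroup E] [NormedSpace ℝ E]
    {f f' : ℝ → E} {K a b c : ℝ}
    (hf : ∀ x ∈ Icc a b, HasDerivWithinAt f (f' x) (Icc a b) x)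
    (hbound : ∀ x ∈ Icc a b, ‖f' x‖ ≤ K * ‖f x‖) (hc : c ∈ Icc a b) (hfc : f c = 0) :
    EqOn f 0 (Icc a b) := by
  have hcont : ContinuousOn f (Icc a b) := fun x hx => (hf x hx).continuousWithinAt
  have hright : ∀ x ∈ Icc c b, f x = 0 :=
    eq_zero_of_abs_deriv_le_mul_abs_self_of_eq_zero_right
      (hcont.mono (Icc_subset_Icc_left hc.1))
      (fun x hx => (hf x ⟨hc.1.trans hx.1, hx.2.le⟩).mono_of_mem_nhdsWithin
        (Icc_mem_nhdsGE_of_mem ⟨hc.1.trans hx.1, hx.2⟩))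
      hfc (fun x hx => hbound x ⟨hc.1.trans hx.1, hx.2.le⟩)
  have hmaps : MapsTo Neg.neg (Icc (-b) (-a)) (Icc a b) := fun x hx =>
    ⟨le_neg.1 hx.2, neg_le.1 hx.1⟩
  have hsub : Icc (-c) (-a) ⊆ Icc (-b) (-a) := Icc_subset_Icc_left (neg_le_neg hc.2)
  have hderiv_neg : ∀ x ∈ Icc (-b) (-a),
      HasDerivWithinAt (f ∘ Neg.neg) (-f' (-x)) (Icc (-b) (-a)) x := fun x hx => by
    simpa using (hf (-x) (hmaps hx)).scomp x (hasDerivWithinAt_neg x _) hmaps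
  have hleft : ∀ x ∈ Icc (-c) (-a), f (-x) = 0 :=
    eq_zero_of_abs_deriv_le_mul_abs_self_of_eq_zero_right (f' := fun x => -f' (-x))
      (fun x hx => ((hderiv_neg x (hsub hx)).mono hsub).continuousWithinAt)
      (fun x hx => (hderiv_neg x (hsub ⟨hx.1, hx.2.le⟩)).mono_of_mem_nhdsWithin
        (Icc_mem_nhdsGE_of_mem ⟨(neg_le_neg hc.2).trans hx.1, hx.2⟩))
      (by simpa using hfc)
      (fun x hx => by simpa using hbound (-x) (hmaps (hsub ⟨hx.1, hx.2.le⟩)))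
  intro x hx
  rcases le_total c x with hcx | hxc
  · exact hright x ⟨hcx, hx.2⟩
  · simpa using hleft (-x) ⟨neg_le_neg hxc, neg_le_neg hx.1⟩

theorem exists_deriv_pos_of_lt {f f' : ℝ → ℝ} {a b : ℝ} (hab : a ≤ b)
    (hf : ∀ x ∈ Icc a b, HasDerivWithinAt f (f' x) (Icc a b) x) (hlt : f a < f b) :
    ∃ x ∈ Icc a b, 0 < f' x := by
  by_contra! hnonpos
  have hanti : AntitoneOn f (Icc a b) :=
    antitoneOn_of_hasDerivWithinAt_nonpos (convex_Icc a b)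
      (fun x hx => (hf x hx).continuousWithinAt)
      (fun x hx => (hf x (interior_subset hx)).mono interior_subset)
      (fun x hx => hnonpos x (interior_subset hx))
  exact hlt.not_ge (hanti (left_mem_Icc.2 hab) (right_mem_Icc.2 hab) hab)

theorem deriv_pos_of_ne_zero_of_lt {f f' : ℝ → ℝ} {a b : ℝ}
    (hf : ∀ x ∈ Icc a b, HasDerivWithinAt f (f' x) (Icc a b) x)
    (hne : ∀ x ∈ Icc a b, f' x ≠ 0) (hlt : f a < f b) : ∀ x ∈ Icc a b, 0 < f' x := by
  rcases hasDerivWithinAt_forall_lt_or_forall_gt_of_forall_ne (convex_Icc a b) hf hne with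
    hneg | hpos
  · intro x hx
    obtain ⟨c, hc, hc_pos⟩ := exists_deriv_pos_of_lt (hx.1.trans hx.2) hf hlt
    exact absurd hc_pos (hneg c hc).not_gt
  · exact hpos

namespace IsC2On

variable {u u' u'' : ℝ → ℝ} {s : Set ℝ} {a b K : ℝ}

theorem continuousOn (hu : IsC2On u u' u'' s) : ContinuousOn u s :=
  fun x hx => (hu.1 x hx).continuousWithinAt

theorem continuousOn_deriv (hu : IsC2On u u' u'' s) : ContinuousOn u' s :=
  fun x hx => (hu.2.1 x hx).continuousWithinAt

theorem mono {t : Set ℝ} (hu : IsC2On u u' u'' s) (hts : t ⊆ s) : IsC2On u u' u'' t :=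
  ⟨fun x hx => (hu.1 x (hts hx)).mono hts, fun x hx => (hu.2.1 x (hts hx)).mono hts,
    hu.2.2.mono hts⟩

theorem sub {w w' w'' : ℝ → ℝ} (hu : IsC2On u u' u'' s) (hw : IsC2On w w' w'' s) :
    IsC2On (u - w) (u' - w') (u'' - w'') s :=
  ⟨fun x hx => (hu.1 x hx).sub (hw.1 x hx), fun x hx => (hu.2.1 x hx).sub (hw.2.1 x hx),
    hu.2.2.sub hw.2.2⟩

theorem of_invOn {X : ℝ → ℝ} {t : Set ℝ} (hs : IsCompact s) (hu : IsC2On u u' u'' s)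
    (hne : ∀ x ∈ s, u' x ≠ 0) (hX : MapsTo X t s) (hinv : InvOn X u s t) :
    IsC2On X (fun v => (u' (X v))⁻¹) (fun v => -u'' (X v) / u' (X v) ^ 3) t := by
  have hXcont : ContinuousOn X t := continuousOn_of_invOn_of_isCompact hs hu.continuousOn hX hinv
  have hXderiv : ∀ v ∈ t, HasDerivWithinAt X (u' (X v))⁻¹ t v := fun v hv =>
    hasDerivWithinAt_of_rightInvOn (hXcont v hv) hX (hu.1 _ (hX hv)) (hne _ (hX hv)) hv hinv.2
  refine ⟨hXderiv, fun v hv => ?_, ?_⟩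
  · have hne_v : u' (X v) ≠ 0 := hne _ (hX hv)
    refine (((hu.2.1 _ (hX hv)).comp v (hXderiv v hv) hX).inv hne_v).congr_deriv ?_
    simp only [Function.comp_apply]
    field_simp
  · exact (hu.2.2.comp hXcont hX).neg.div ((hu.continuousOn_deriv.comp hXcont hX).pow 3)
      fun v hv => pow_ne_zero 3 (hne _ (hX hv))

theorem strictMonoOn (hs : Convex ℝ s) (hu : IsC2On u u' u'' s) (hpos : ∀ x ∈ s, 0 < u' x) :
    StrictMonoOn u s :=
  strictMonoOn_of_hasDerivWithinAt_pos hs hu.continuousOn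
    (fun x hx => (hu.1 x (interior_subset hx)).mono interior_subset)
    (fun x hx => hpos x (interior_subset hx))

theorem exists_inverse (hab : a ≤ b) (hu : IsC2On u u' u'' (Icc a b))
    (hpos : ∀ x ∈ Icc a b, 0 < u' x) :
    ∃ X, IsC2On X (fun v => (u' (X v))⁻¹) (fun v => -u'' (X v) / u' (X v) ^ 3)
        (Icc (u a) (u b)) ∧
      StrictMonoOn X (Icc (u a) (u b)) ∧ MapsTo X (Icc (u a) (u b)) (Icc a b) ∧
      InvOn X u (Icc a b) (Icc (u a) (u b)) := by
  obtain ⟨X, hXmono, hX, hinv⟩ := exists_strictMonoOn_invOn_Icc hab hu.continuousOn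
    (hu.strictMonoOn (convex_Icc a b) hpos)
  exact ⟨X, hu.of_invOn isCompact_Icc (fun x hx => (hpos x hx).ne') hX hinv, hXmono, hX, hinv⟩

theorem monotoneOn_mul_deriv (hs : Convex ℝ s) (hu : IsC2On u u' u'' s)
    (hsign : ∀ x ∈ s, 0 ≤ u x * u'' x) : MonotoneOn (fun x => u x * u' x) s :=
  monotoneOn_of_hasDerivWithinAt_nonneg hs (hu.continuousOn.mul hu.continuousOn_deriv)
    (fun x hx => ((hu.1 x (interior_subset hx)).mul (hu.2.1 x (interior_subset hx))).mono
      interior_subset)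
    (fun x hx => add_nonneg (mul_self_nonneg _) (hsign x (interior_subset hx)))

theorem eqOn_zero_of_mul_nonneg (hu : IsC2On u u' u'' (Icc a b))
    (hsign : ∀ x ∈ Icc a b, 0 ≤ u x * u'' x) (ha : u a = 0) (hb : u b * u' b = 0) :
    EqOn u 0 (Icc a b) := by
  have hmono := hu.monotoneOn_mul_deriv (convex_Icc a b) hsign
  have hmul_deriv : ∀ x ∈ Icc a b, u x * u' x = 0 := fun x hx => by
    have hab : a ≤ b := hx.1.trans hx.2
    apply le_antisymm
    · simpa only [hb] using hmono hx (right_mem_Icc.2 hab) hx.2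
    · simpa only [ha, zero_mul] using hmono (left_mem_Icc.2 hab) hx hx.1
  have hsq_deriv : ∀ x ∈ Icc a b, HasDerivWithinAt (fun x => u x ^ 2) 0 (Icc a b) x := fun x hx =>
    ((hu.1 x hx).pow 2).congr_deriv (by linear_combination 2 * hmul_deriv x hx)
  intro x hx
  have hsq : u x ^ 2 = u a ^ 2 :=
    constant_of_has_deriv_right_zero (hu.continuousOn.pow 2)
      (fun y hy => (hsq_deriv y (Ico_subset_Icc_self hy)).mono_of_mem_nhdsWithin
        (Icc_mem_nhdsGE_of_mem hy)) x hx
  simpa [ha] using hsq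

theorem eqOn_zero_of_abs_deriv_two_le_mul_abs {c : ℝ} (hu : IsC2On u u' u'' (Icc a b))
    (hbound : ∀ x ∈ Icc a b, |u'' x| ≤ K * |u x|) (hc : c ∈ Icc a b) (huc : u c = 0)
    (huc' : u' c = 0) : EqOn u 0 (Icc a b) := by
  have hpair : EqOn (fun x => (u x, u' x)) 0 (Icc a b) := by
    refine eqOn_zero_of_norm_deriv_le_mul_norm_s5 (K := max 1 K)
      (fun x hx => (hu.1 x hx).prodMk (hu.2.1 x hx)) (fun x hx => ?_) hc (by simp [huc, huc'])
    simp only [Prod.norm_mk, Real.norm_eq_abs]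
    apply max_le
    · calc |u' x| = 1 * |u' x| := (one_mul _).symm
        _ ≤ max 1 K * max |u x| |u' x| := by gcongr <;> simp
    · calc |u'' x| ≤ K * |u x| := hbound x hx
        _ ≤ max 1 K * max |u x| |u' x| := by gcongr <;> simp
  exact fun x hx => congrArg Prod.fst (hpair hx)

theorem deriv_pos_of_mul_nonneg (hu : IsC2On u u' u'' (Icc a b))
    (hsign : ∀ x ∈ Icc a b, 0 ≤ u x * u'' x) (hbound : ∀ x ∈ Icc a b, |u'' x| ≤ K * |u x|)
    (ha : u a = 0) (hb : 0 < u b) : ∀ x ∈ Icc a b, 0 < u' x := by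
  refine deriv_pos_of_ne_zero_of_lt hu.1 (fun c hc huc' => hb.ne' ?_) (by rwa [ha])
  have hsub : Icc a c ⊆ Icc a b := Icc_subset_Icc_right hc.2
  have huc : u c = 0 := (hu.mono hsub).eqOn_zero_of_mul_nonneg (fun x hx => hsign x (hsub hx)) ha
    (by rw [huc', mul_zero]) (right_mem_Icc.2 hc.1)
  exact hu.eqOn_zero_of_abs_deriv_two_le_mul_abs hbound hc huc huc'
    (right_mem_Icc.2 (hc.1.trans hc.2))

theorem deriv_pos_of_abs_deriv_two_le_mul_abs_deriv (hu : IsC2On u u' u'' (Icc a b))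
    (hbound : ∀ x ∈ Icc a b, |u'' x| ≤ K * |u' x|) (hlt : u a < u b) :
    ∀ x ∈ Icc a b, 0 < u' x := by
  refine deriv_pos_of_ne_zero_of_lt hu.1 (fun c hc huc' => ?_) hlt
  obtain ⟨x, hx, hx_pos⟩ := exists_deriv_pos_of_lt (hc.1.trans hc.2) hu.1 hlt
  exact hx_pos.ne' (eqOn_zero_of_norm_deriv_le_mul_norm_s5 hu.2.1 hbound hc huc' hx)

end IsC2On

variable {N : ℝ → ℝ → ℝ} {a b ub : ℝ} {u u' u'' w w' w'' Y Y' Y'' : ℝ → ℝ}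

theorem monotone_Ncal_of_pd1_nonneg {x : ℝ} (hN : Differentiable ℝ fun t => N t x)
    (h : ∀ t, 0 ≤ pd1 (Ncal N) t x) : Monotone fun t => Ncal N t x :=
  monotone_of_deriv_nonneg (hN.mul differentiable_id) h

theorem IsStraightBVP.deriv_pos (hub : 0 < ub) (hN : Continuous (Function.uncurry N))
    (hmono : ∀ x ∈ Icc a b, Monotone fun t => Ncal N t x) (hu : IsStraightBVP N a b ub u u' u'') :
    ∀ x ∈ Icc a b, 0 < u' x := by
  obtain ⟨hC2, heq, ha, hb⟩ := hu
  obtain ⟨K, hK⟩ := isCompact_Icc.exists_bound_of_continuousOn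
    (hN.comp_continuousOn (hC2.continuousOn.prodMk continuousOn_id))
  refine hC2.deriv_pos_of_mul_nonneg (K := K) (fun x hx => ?_) (fun x hx => ?_) ha
    (by rwa [hb])
  · have hsign := (monovary_id_iff.2 (hmono x hx)).sub_mul_sub_nonneg 0 (u x)
    simpa [heq x hx, Ncal, mul_comm] using hsign
  · rw [heq x hx, Ncal, abs_mul]
    exact mul_le_mul_of_nonneg_right (hK x hx) (abs_nonneg _)

theorem IsStraightBVP.eqOn (hmono : ∀ x ∈ Icc a b, Monotone fun t => Ncal N t x)
    (hu : IsStraightBVP N a b ub u u' u'') (hw : IsStraightBVP N a b ub w w' w'') :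
    EqOn u w (Icc a b) := by
  obtain ⟨hu2, hueq, hua, hub⟩ := hu
  obtain ⟨hw2, hweq, hwa, hwb⟩ := hw
  have hdiff : EqOn (u - w) 0 (Icc a b) := by
    refine (hu2.sub hw2).eqOn_zero_of_mul_nonneg (fun x hx => ?_) (by simp [hua, hwa])
      (by simp [hub, hwb])
    have hsign := (monovary_id_iff.2 (hmono x hx)).sub_mul_sub_nonneg (w x) (u x)
    simpa [hueq x hx, hweq x hx, mul_comm] using hsign
  exact fun x hx => sub_eq_zero.1 (hdiff hx)

theorem IsStraightBVP.exists_isInverseBVP_invOn (hab : a ≤ b)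
    (hu : IsStraightBVP N a b ub u u' u'')
    (hpos : ∀ x ∈ Icc a b, 0 < u' x) :
    ∃ X X' X'', IsInverseBVP N a b ub X X' X'' ∧ StrictMonoOn X (Icc 0 ub) ∧
      InvOn X u (Icc a b) (Icc 0 ub) := by
  obtain ⟨hC2, heq, ha, hb⟩ := hu
  obtain ⟨X, hXC2, hXmono, hX, hinv⟩ := hC2.exists_inverse hab hpos
  rw [ha, hb] at hXC2 hXmono hX hinv
  refine ⟨X, _, _, ⟨hXC2, fun v hv => ?_, ?_, ?_⟩, hXmono, hinv⟩
  · rw [heq _ (hX hv), hinv.2 hv, inv_pow, div_eq_mul_inv]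
  · rw [← ha, hinv.1 (left_mem_Icc.2 hab)]
  · rw [← hb, hinv.1 (right_mem_Icc.2 hab)]

theorem IsInverseBVP.deriv_pos (hab : a < b) (hN : Continuous (Function.uncurry N))
    (hY : IsInverseBVP N a b ub Y Y' Y'') : ∀ v ∈ Icc 0 ub, 0 < Y' v := by
  obtain ⟨hC2, heq, h0, hb⟩ := hY
  have hcont : ContinuousOn (fun v => -Ncal N v (Y v) * Y' v ^ 2) (Icc 0 ub) :=
    (((hN.comp_continuousOn (continuousOn_id.prodMk hC2.continuousOn)).mul
      continuousOn_id).neg).mul (hC2.continuousOn_deriv.pow 2)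
  obtain ⟨K, hK⟩ := isCompact_Icc.exists_bound_of_continuousOn hcont
  refine hC2.deriv_pos_of_abs_deriv_two_le_mul_abs_deriv (K := K) (fun v hv => ?_) (by rwa [h0, hb])
  calc |Y'' v| = |-Ncal N v (Y v) * Y' v ^ 2| * |Y' v| := by rw [heq v hv, ← abs_mul]; ring_nf
    _ ≤ K * |Y' v| := mul_le_mul_of_nonneg_right (hK v hv) (abs_nonneg _)

theorem IsInverseBVP.exists_isStraightBVP_invOn (hub : 0 ≤ ub)
    (hY : IsInverseBVP N a b ub Y Y' Y'')
    (hpos : ∀ v ∈ Icc 0 ub, 0 < Y' v) :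
    ∃ w w' w'', IsStraightBVP N a b ub w w' w'' ∧ MapsTo Y (Icc 0 ub) (Icc a b) ∧
      InvOn w Y (Icc 0 ub) (Icc a b) := by
  obtain ⟨hC2, heq, rfl, rfl⟩ := hY
  obtain ⟨w, hwC2, -, hw, hinv⟩ := hC2.exists_inverse hub hpos
  refine ⟨w, _, _, ⟨hwC2, fun x hx => ?_, hinv.1 (left_mem_Icc.2 hub),
    hinv.1 (right_mem_Icc.2 hub)⟩,
    (hC2.strictMonoOn (convex_Icc 0 ub) hpos).monotoneOn.mapsTo_Icc, hinv⟩
  have hne : Y' (w x) ≠ 0 := (hpos _ (hw hx)).ne'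
  simp only [heq _ (hw hx), hinv.2 hx]
  field_simp

theorem inverse_BVP_exists_unique_general
    (hab : a < b) (hub : 0 < ub) (hN : Continuous (Function.uncurry N))
    (hmono : ∀ x ∈ Icc a b, Monotone fun t => Ncal N t x)
    (hu : IsStraightBVP N a b ub u u' u'') :
    ∃ X X' X'' : ℝ → ℝ,
      IsInverseBVP N a b ub X X' X'' ∧
      StrictMonoOn X (Icc 0 ub) ∧
      (∀ t ∈ Icc a b, X (u t) = t) ∧
      (∀ v ∈ Icc (0 : ℝ) ub, u (X v) = v) ∧
      (∀ Y Y' Y'' : ℝ → ℝ, IsInverseBVP N a b ub Y Y' Y'' →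
        ∀ v ∈ Icc (0 : ℝ) ub, Y v = X v) := by
  obtain ⟨X, X', X'', hX, hXmono, hXu⟩ :=
    hu.exists_isInverseBVP_invOn hab.le (hu.deriv_pos hub hN hmono)
  refine ⟨X, X', X'', hX, hXmono, hXu.1, hXu.2, fun Y Y' Y'' hY v hv => ?_⟩
  obtain ⟨w, w', w'', hw, hYmaps, hwY⟩ :=
    hY.exists_isStraightBVP_invOn hub.le (hY.deriv_pos hab hN)
  calc Y v = X (u (Y v)) := (hXu.1 (hYmaps hv)).symm
    _ = X (w (Y v)) := by rw [hu.eqOn hmono hw (hYmaps hv)]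
    _ = X v := by rw [hwY.1 hv]

/-- if the straight BVP has a solution `u`, then the inverse BVP has exactly
one solution; it is strictly increasing and is the inverse function of `u`. -/
theorem inverse_BVP_exists_unique
    (a b ub : ℝ) (hab : a < b) (hub : 0 < ub)
    (N : ℝ → ℝ → ℝ) (hN : ContDiff ℝ 1 (Function.uncurry N))
    (hC1 : ∀ t : ℝ, ∀ x ∈ Icc a b, 0 ≤ pd1 (Ncal N) t x)
    (hC2 : ∀ t : ℝ, 0 ≤ t → ∀ x ∈ Icc a b, 0 ≤ N t x)
    (u u' u'' : ℝ → ℝ)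
    (hu : IsStraightBVP N a b ub u u' u'') :
    ∃ X X' X'' : ℝ → ℝ,
      IsInverseBVP N a b ub X X' X'' ∧
      StrictMonoOn X (Icc 0 ub) ∧
      (∀ t ∈ Icc a b, X (u t) = t) ∧
      (∀ v ∈ Icc (0:ℝ) ub, u (X v) = v) ∧
      (∀ Y Y' Y'' : ℝ → ℝ, IsInverseBVP N a b ub Y Y' Y'' →
        ∀ v ∈ Icc (0:ℝ) ub, Y v = X v) := by
  exact inverse_BVP_exists_unique_general hab hub hN.continuous
    (fun x hx => monotone_Ncal_of_pd1_nonneg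
      ((hN.differentiable one_ne_zero).comp (differentiable_id.prodMk (differentiable_const x)))
      fun t => hC1 t x hx) hu
end
end

section
/- Assume hypothesis (H) and fix a straight mesh on [a,c]. If ν > ν̄ ≥ 0, then ũ_ν(x) > ũ_ν̄(x) for every x ∈ (a,c], and ũ_ν'(x) > ũ_ν̄'(x) for every x ∈ [a,c]. -/
open Set Filter

noncomputable section

/-- Hypothesis (H): `N`, `∂N/∂x`, `∂N/∂u`, `∂²N/∂x∂u`, `∂²N/∂u²` are all
nonnegative for `u ≥ 0` and `x ∈ [a,b]`. -/
def HypH (N : ℝ → ℝ → ℝ) (a b : ℝ) : Prop :=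
  ∀ u : ℝ, 0 ≤ u → ∀ x ∈ Icc a b,
    0 ≤ N u x ∧ 0 ≤ pd2 N u x ∧ 0 ≤ pd1 N u x ∧
    0 ≤ pd2 (pd1 N) u x ∧ 0 ≤ pd1 (pd1 N) u x

/-- A mesh: finitely many strictly increasing points `pt 0 < pt 1 < ⋯ < pt n`. -/
structure Mesh where
  n : ℕ
  pt : ℕ → ℝ
  npos : 0 < n
  mono : ∀ i < n, pt i < pt (i + 1)

/-- The coefficient `α_i(p,q,x)` of the straight discretized equation,
where `xi` is the mesh point `x_i`. -/
def alphaC (N : ℝ → ℝ → ℝ) (xi p q x : ℝ) : ℝ :=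
  (pd1 N q xi * p + pd2 N q xi) * (x - xi) + N q xi

/-- The coefficient `β_i(p,q,v)` of the inverse discretized equation,
where `ui` is the (shifted) mesh point `ū_i`. -/
def betaC (N : ℝ → ℝ → ℝ) (ui p q v : ℝ) : ℝ :=
  -(pd1 (Ncal N) ui q + pd2 (Ncal N) ui q * p) * (v - ui) - Ncal N ui q

/-- Shifted mesh knots `ū_i = max(u_i, s)`. -/
def ubar (m : Mesh) (s : ℝ) (i : ℕ) : ℝ := max (m.pt i) s

/-- A straight scheme solution on `[a,c]` with respect to the mesh `m`:
`ũ ∈ C¹([a,c])` and on each mesh subinterval `[x_i, x_{i+1}]` the second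
derivative of `ũ` equals `α_i(ũ'(x_i), ũ(x_i), x)·ũ(x)`. -/
def IsStraightSol (N : ℝ → ℝ → ℝ) (a c : ℝ) (m : Mesh) (u u' : ℝ → ℝ) : Prop :=
  (∀ x ∈ Icc a c, HasDerivWithinAt u (u' x) (Icc a c) x) ∧
  ContinuousOn u' (Icc a c) ∧
  ∀ i < m.n, ∀ x ∈ Icc (m.pt i) (m.pt (i + 1)),
    HasDerivWithinAt u'
      (alphaC N (m.pt i) (u' (m.pt i)) (u (m.pt i)) x * u x)
      (Icc (m.pt i) (m.pt (i + 1))) x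

/-- An inverse scheme solution on `[s, ub]` with respect to the mesh `m` (shifted by `s`):
`x̃ ∈ C¹([s,ub])` and on each subinterval `[ū_i, ū_{i+1}]` the second derivative of `x̃`
equals `β_i(x̃'(ū_i), x̃(ū_i), v)·(x̃'(v))³`. -/
def IsInvSol (N : ℝ → ℝ → ℝ) (ub : ℝ) (m : Mesh) (s : ℝ) (X X' : ℝ → ℝ) : Prop :=
  (∀ v ∈ Icc s ub, HasDerivWithinAt X (X' v) (Icc s ub) v) ∧
  ContinuousOn X' (Icc s ub) ∧
  ∀ i < m.n, ∀ v ∈ Icc (ubar m s i) (ubar m s (i + 1)),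
    HasDerivWithinAt X'
      (betaC N (ubar m s i) (X' (ubar m s i)) (X (ubar m s i)) v * (X' v) ^ 3)
      (Icc (ubar m s i) (ubar m s (i + 1))) v

/-- A scheme pair `(ũ, x̃)`. -/
def IsSchemePair (N : ℝ → ℝ → ℝ) (a b c ub : ℝ) (ms mi : Mesh)
    (u u' X X' : ℝ → ℝ) : Prop :=
  IsStraightSol N a c ms u u' ∧ u a = 0 ∧ 0 < u c ∧ u c < ub ∧ u' c ≠ 0 ∧
  IsInvSol N ub mi (u c) X X' ∧ X ub = b ∧ X (u c) = c ∧ X' (u c) = 1 / u' c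

/-- A scheme pair additionally satisfying the sign inequalities
`0 < ũ < u_b`, `ũ' > 0`, `ũ'' ≥ 0` on `(a,c]`, and `c < x̃`, `x̃' > 0`, `x̃'' ≤ 0`
on `(ũ(c), u_b]` (second derivatives taken on the mesh subintervals). -/
def GoodPair (N : ℝ → ℝ → ℝ) (a b c ub : ℝ) (ms mi : Mesh)
    (u u' X X' : ℝ → ℝ) : Prop :=
  IsSchemePair N a b c ub ms mi u u' X X' ∧
  (∀ x ∈ Ioc a c, 0 < u x ∧ u x < ub ∧ 0 < u' x) ∧
  (∀ i < ms.n, ∀ x ∈ Icc (ms.pt i) (ms.pt (i + 1)), x ∈ Ioc a c →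
    0 ≤ alphaC N (ms.pt i) (u' (ms.pt i)) (u (ms.pt i)) x * u x) ∧
  (∀ v ∈ Ioc (u c) ub, c < X v ∧ 0 < X' v) ∧
  (∀ i < mi.n, ∀ v ∈ Icc (ubar mi (u c) i) (ubar mi (u c) (i + 1)), v ∈ Ioc (u c) ub →
    betaC N (ubar mi (u c) i) (X' (ubar mi (u c) i)) (X (ubar mi (u c) i)) v * (X' v) ^ 3 ≤ 0)

/-- All steps of the straight mesh `ms` and of the (shifted) inverse mesh `mi`
are of size at most `h`. -/
def StepLe (ms mi : Mesh) (s h : ℝ) : Prop :=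
  (∀ i < ms.n, ms.pt (i + 1) - ms.pt i ≤ h) ∧
  (∀ i < mi.n, ubar mi s (i + 1) - ubar mi s i ≤ h)

/-!
The difference `w = ũ_ν - ũ_ν̄` starts with `w ≥ 0` and `w' > 0`. As long as `w' > 0`, the ordering
`w ≥ 0` persists, so by (H) the coefficient `α_i` of the steeper solution is the larger one and
`w'' ≥ 0`; hence `w'` cannot decrease to `0`. This needs `ũ_ν̄ ≥ 0` and `ũ_ν̄' ≥ 0`, which also hold
when `ν̄ = 0`: adding `ε exp (k (x - a))` to `ũ_ν̄` reduces that case to a positive initial slope.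
-/

theorem left_le_of_hasDerivWithinAt_nonneg {f f' : ℝ → ℝ} {s t : ℝ}
    (hf : ∀ x ∈ Icc s t, HasDerivWithinAt f (f' x) (Icc s t) x)
    (hf' : ∀ x ∈ Ioo s t, 0 ≤ f' x) : ∀ x ∈ Icc s t, f s ≤ f x := by
  have hmono : MonotoneOn f (Icc s t) :=
    monotoneOn_of_hasDerivWithinAt_nonneg (convex_Icc s t)
      (fun x hx => (hf x hx).continuousWithinAt)
      (fun x hx => (hf x (interior_subset hx)).mono interior_subset)
      (by simpa only [interior_Icc] using hf')
  exact fun x hx => hmono (left_mem_Icc.2 (hx.1.trans hx.2)) hx hx.1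

section SecondOrderInequality

variable {w w' w'' : ℝ → ℝ} {s t : ℝ}

theorem deriv_pos_of_second_deriv_nonneg_of_nonneg
    (hw : ∀ x ∈ Icc s t, HasDerivWithinAt w (w' x) (Icc s t) x)
    (hw' : ∀ x ∈ Icc s t, HasDerivWithinAt w' (w'' x) (Icc s t) x)
    (hw'' : ∀ x ∈ Icc s t, 0 ≤ w x → 0 ≤ w'' x) (hs : 0 ≤ w s) (hs' : 0 < w' s) :
    ∀ x ∈ Icc s t, 0 < w' x := by
  by_contra! hneg
  obtain ⟨τ, ⟨hτ, hτ_nonpos⟩, hτ_least⟩ : ∃ τ, IsLeast {x ∈ Icc s t | w' x ≤ 0} τ := by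
    refine IsCompact.exists_isLeast (isCompact_Icc.of_isClosed_subset ?_ (sep_subset _ _)) hneg
    exact isClosed_Icc.isClosed_le (fun x hx => (hw' x hx).continuousWithinAt) continuousOn_const
  have hsub : Icc s τ ⊆ Icc s t := Icc_subset_Icc_right hτ.2
  have hpos : ∀ x ∈ Ioo s τ, 0 < w' x := fun x hx => by
    by_contra! hx'
    exact hx.2.not_ge (hτ_least ⟨hsub (Ioo_subset_Icc_self hx), hx'⟩)
  have hw_nonneg : ∀ x ∈ Icc s τ, 0 ≤ w x := fun x hx =>
    hs.trans <| left_le_of_hasDerivWithinAt_nonneg (fun y hy => (hw y (hsub hy)).mono hsub)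
      (fun y hy => (hpos y hy).le) x hx
  have hle : w' s ≤ w' τ := by
    refine left_le_of_hasDerivWithinAt_nonneg (fun x hx => (hw' x (hsub hx)).mono hsub)
      (fun x hx => ?_) τ (right_mem_Icc.2 hτ.1)
    have hx := Ioo_subset_Icc_self hx
    exact hw'' x (hsub hx) (hw_nonneg x hx)
  exact (hs'.trans_le hle).not_ge hτ_nonpos

theorem deriv_nonneg_of_mul_le_second_deriv {A : ℝ → ℝ}
    (hw : ∀ x ∈ Icc s t, HasDerivWithinAt w (w' x) (Icc s t) x)
    (hw' : ∀ x ∈ Icc s t, HasDerivWithinAt w' (w'' x) (Icc s t) x)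
    (hA : ∀ x ∈ Icc s t, 0 ≤ A x) (hA_bdd : BddAbove (A '' Icc s t))
    (hw'' : ∀ x ∈ Icc s t, A x * w x ≤ w'' x) (hs : 0 ≤ w s) (hs' : 0 ≤ w' s) :
    ∀ x ∈ Icc s t, 0 ≤ w' x := by
  obtain ⟨k, hk, hAk⟩ : ∃ k : ℝ, 0 < k ∧ ∀ x ∈ Icc s t, A x ≤ k ^ 2 := by
    obtain ⟨M, hM⟩ := hA_bdd
    refine ⟨1 + |M|, by positivity, fun x hx => (hM (mem_image_of_mem A hx)).trans ?_⟩
    nlinarith [le_abs_self M, abs_nonneg M]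
  let E : ℝ → ℝ := fun x => Real.exp (k * (x - s))
  have hE_pos : ∀ x, 0 < E x := fun x => Real.exp_pos _
  have hE : ∀ x, HasDerivAt E (k * E x) x := fun x => by
    simpa [E, mul_comm] using (((hasDerivAt_id x).sub_const s).const_mul k).exp
  have hperturbed : ∀ ε > 0, ∀ x ∈ Icc s t, 0 < w' x + ε * (k * E x) := by
    intro ε hε
    have hεE : ∀ x, 0 < ε * E x := fun x => mul_pos hε (hE_pos x)
    refine deriv_pos_of_second_deriv_nonneg_of_nonneg (w := fun x => w x + ε * E x)
      (w'' := fun x => w'' x + ε * (k * (k * E x)))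
      (fun x hx => (hw x hx).add ((hE x).const_mul ε).hasDerivWithinAt)
      (fun x hx => (hw' x hx).add (((hE x).const_mul k).const_mul ε).hasDerivWithinAt)
      (fun x hx hx_nonneg => ?_) (add_nonneg hs (hεE s).le)
      (add_pos_of_nonneg_of_pos hs' (mul_pos hε (mul_pos hk (hE_pos s))))
    calc 0 ≤ A x * (w x + ε * E x) := mul_nonneg (hA x hx) hx_nonneg
      _ = A x * w x + A x * (ε * E x) := mul_add _ _ _
      _ ≤ w'' x + k ^ 2 * (ε * E x) :=
        add_le_add (hw'' x hx) (mul_le_mul_of_nonneg_right (hAk x hx) (hεE x).le)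
      _ = w'' x + ε * (k * (k * E x)) := by ring
  intro x hx
  have hkE : 0 < k * E x := mul_pos hk (hE_pos x)
  refine le_of_forall_pos_le_add fun δ hδ => ?_
  simpa only [div_mul_cancel₀ δ hkE.ne'] using (hperturbed (δ / (k * E x)) (div_pos hδ hkE) x hx).le

end SecondOrderInequality

/-- The Cauchy data `(v, v')` at `x` are nonnegative and dominated by `(u, u')`, strictly in the
slope. This is the order relation that the straight scheme propagates from left to right. -/
structure CauchyDominatedAt (v v' u u' : ℝ → ℝ) (x : ℝ) : Prop where
  nonneg : 0 ≤ v x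
  slope_nonneg : 0 ≤ v' x
  le : v x ≤ u x
  slope_lt : v' x < u' x

theorem CauchyDominatedAt.of_linear_ode {u u' v v' A B : ℝ → ℝ} {s t : ℝ}
    (h : CauchyDominatedAt v v' u u' s)
    (hu : ∀ x ∈ Icc s t, HasDerivWithinAt u (u' x) (Icc s t) x)
    (hu' : ∀ x ∈ Icc s t, HasDerivWithinAt u' (A x * u x) (Icc s t) x)
    (hv : ∀ x ∈ Icc s t, HasDerivWithinAt v (v' x) (Icc s t) x)
    (hv' : ∀ x ∈ Icc s t, HasDerivWithinAt v' (B x * v x) (Icc s t) x)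
    (hB : ∀ x ∈ Icc s t, 0 ≤ B x) (hB_bdd : BddAbove (B '' Icc s t))
    (hBA : ∀ x ∈ Icc s t, B x ≤ A x) :
    ∀ x ∈ Icc s t, CauchyDominatedAt v v' u u' x := by
  have hv'_nonneg : ∀ x ∈ Icc s t, 0 ≤ v' x :=
    deriv_nonneg_of_mul_le_second_deriv hv hv' hB hB_bdd (fun _ _ => le_rfl) h.nonneg
      h.slope_nonneg
  have hv_nonneg : ∀ x ∈ Icc s t, 0 ≤ v x := fun x hx =>
    h.nonneg.trans <| left_le_of_hasDerivWithinAt_nonneg hv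
      (fun y hy => hv'_nonneg y (Ioo_subset_Icc_self hy)) x hx
  have hd : ∀ x ∈ Icc s t, HasDerivWithinAt (fun x => u x - v x) (u' x - v' x) (Icc s t) x :=
    fun x hx => (hu x hx).sub (hv x hx)
  have hd'_pos : ∀ x ∈ Icc s t, 0 < u' x - v' x := by
    refine deriv_pos_of_second_deriv_nonneg_of_nonneg hd (fun x hx => (hu' x hx).sub (hv' x hx))
      (fun x hx hvu => sub_nonneg.2 ?_) (sub_nonneg.2 h.le) (sub_pos.2 h.slope_lt)
    exact mul_le_mul (hBA x hx) (sub_nonneg.1 hvu) (hv_nonneg x hx) ((hB x hx).trans (hBA x hx))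
  have hd_nonneg : ∀ x ∈ Icc s t, 0 ≤ u x - v x := fun x hx =>
    (sub_nonneg.2 h.le).trans <| left_le_of_hasDerivWithinAt_nonneg hd
      (fun y hy => (hd'_pos y (Ioo_subset_Icc_self hy)).le) x hx
  exact fun x hx => ⟨hv_nonneg x hx, hv'_nonneg x hx, sub_nonneg.1 (hd_nonneg x hx),
    sub_pos.1 (hd'_pos x hx)⟩

theorem differentiable_fderiv_of_contDiff_two {E F : Type*} [NormedAddCommGroup E]
    [NormedSpace ℝ E] [NormedAddCommGroup F] [NormedSpace ℝ F] {g : E → F} (hg : ContDiff ℝ 2 g) :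
    Differentiable ℝ (fderiv ℝ g) :=
  (hg.fderiv_right (m := 1) (by norm_num)).differentiable one_ne_zero

section PartialDerivatives

variable {f : ℝ → ℝ → ℝ}

theorem pd1_eq_fderiv {u x : ℝ} (hf : DifferentiableAt ℝ (Function.uncurry f) (u, x)) :
    pd1 f u x = fderiv ℝ (Function.uncurry f) (u, x) (1, 0) :=
  (HasFDerivAt.comp_hasDerivAt (f := fun t : ℝ => (t, x)) u hf.hasFDerivAt
    ((hasDerivAt_id u).prodMk (hasDerivAt_const u x))).deriv

theorem pd2_eq_fderiv {u x : ℝ} (hf : DifferentiableAt ℝ (Function.uncurry f) (u, x)) :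
    pd2 f u x = fderiv ℝ (Function.uncurry f) (u, x) (0, 1) :=
  (HasFDerivAt.comp_hasDerivAt (f := fun t : ℝ => (u, t)) x hf.hasFDerivAt
    ((hasDerivAt_const x u).prodMk (hasDerivAt_id x))).deriv

theorem uncurry_pd1_eq_fderiv (hf : Differentiable ℝ (Function.uncurry f)) :
    Function.uncurry (pd1 f) = fun z => fderiv ℝ (Function.uncurry f) z (1, 0) :=
  funext fun z => pd1_eq_fderiv (hf z)

theorem uncurry_pd2_eq_fderiv (hf : Differentiable ℝ (Function.uncurry f)) :
    Function.uncurry (pd2 f) = fun z => fderiv ℝ (Function.uncurry f) z (0, 1) :=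
  funext fun z => pd2_eq_fderiv (hf z)

theorem differentiable_uncurry_pd1 (hf : ContDiff ℝ 2 (Function.uncurry f)) :
    Differentiable ℝ (Function.uncurry (pd1 f)) := by
  rw [uncurry_pd1_eq_fderiv (hf.differentiable two_ne_zero)]
  exact (differentiable_fderiv_of_contDiff_two hf).clm_apply (differentiable_const _)

theorem differentiable_uncurry_pd2 (hf : ContDiff ℝ 2 (Function.uncurry f)) :
    Differentiable ℝ (Function.uncurry (pd2 f)) := by
  rw [uncurry_pd2_eq_fderiv (hf.differentiable two_ne_zero)]
  exact (differentiable_fderiv_of_contDiff_two hf).clm_apply (differentiable_const _)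

theorem pd1_pd2_comm (hf : ContDiff ℝ 2 (Function.uncurry f)) (u x : ℝ) :
    pd1 (pd2 f) u x = pd2 (pd1 f) u x := by
  have hd := hf.differentiable two_ne_zero
  have hd2 := differentiable_fderiv_of_contDiff_two hf (u, x)
  have hsymm : IsSymmSndFDerivAt ℝ (Function.uncurry f) (u, x) :=
    hf.contDiffAt.isSymmSndFDerivAt (by simp)
  rw [pd1_eq_fderiv (differentiable_uncurry_pd2 hf _),
    pd2_eq_fderiv (differentiable_uncurry_pd1 hf _), uncurry_pd1_eq_fderiv hd,
    uncurry_pd2_eq_fderiv hd, fderiv_clm_apply hd2 (differentiableAt_const _),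
    fderiv_clm_apply hd2 (differentiableAt_const _)]
  simpa using hsymm.eq (1, 0) (0, 1)

end PartialDerivatives

/-- A form of hypothesis (H) at a single position `x` that involves no second derivatives of `N`:
they are replaced by monotonicity of `∂N/∂u` and `∂N/∂x` in `u ≥ 0`, which also carries the signs
recorded at `u = 0` over to all `u ≥ 0`. -/
structure FirstOrderHypH (N : ℝ → ℝ → ℝ) (x : ℝ) : Prop where
  nonneg_zero : 0 ≤ N 0 x
  pd1_nonneg_zero : 0 ≤ pd1 N 0 x
  pd2_nonneg_zero : 0 ≤ pd2 N 0 x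
  monotoneOn_pd1 : MonotoneOn (fun u => pd1 N u x) (Ici 0)
  monotoneOn_pd2 : MonotoneOn (fun u => pd2 N u x) (Ici 0)

theorem monotoneOn_Ici_of_pd1_nonneg {f : ℝ → ℝ → ℝ} {x s : ℝ}
    (hf : Differentiable ℝ fun u => f u x) (hf' : ∀ u, s ≤ u → 0 ≤ pd1 f u x) :
    MonotoneOn (fun u => f u x) (Ici s) :=
  monotoneOn_of_deriv_nonneg (convex_Ici s) hf.continuous.continuousOn hf.differentiableOn
    fun u hu => hf' u (interior_subset hu)

theorem HypH.firstOrderHypH {N : ℝ → ℝ → ℝ} {a b x : ℝ} (hH : HypH N a b)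
    (hN : ContDiff ℝ 2 (Function.uncurry N)) (hx : x ∈ Icc a b) : FirstOrderHypH N x where
  nonneg_zero := (hH 0 le_rfl x hx).1
  pd1_nonneg_zero := (hH 0 le_rfl x hx).2.2.1
  pd2_nonneg_zero := (hH 0 le_rfl x hx).2.1
  monotoneOn_pd1 :=
    monotoneOn_Ici_of_pd1_nonneg
      ((differentiable_uncurry_pd1 hN).comp (differentiable_id.prodMk (differentiable_const x)))
      fun u hu => (hH u hu x hx).2.2.2.2
  monotoneOn_pd2 :=
    monotoneOn_Ici_of_pd1_nonneg
      ((differentiable_uncurry_pd2 hN).comp (differentiable_id.prodMk (differentiable_const x)))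
      fun u hu => (hH u hu x hx).2.2.2.1.trans_eq (pd1_pd2_comm hN u x).symm

namespace FirstOrderHypH

variable {N : ℝ → ℝ → ℝ} {xi : ℝ}

theorem pd1_nonneg (hH : FirstOrderHypH N xi) {q : ℝ} (hq : 0 ≤ q) : 0 ≤ pd1 N q xi :=
  hH.pd1_nonneg_zero.trans (hH.monotoneOn_pd1 self_mem_Ici hq hq)

theorem alphaC_mono (hH : FirstOrderHypH N xi) (hN : Differentiable ℝ fun q => N q xi)
    {p₁ p₂ q₁ q₂ x : ℝ} (hp₂ : 0 ≤ p₂) (hp : p₂ ≤ p₁) (hq₂ : 0 ≤ q₂) (hq : q₂ ≤ q₁)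
    (hx : xi ≤ x) : alphaC N xi p₂ q₂ x ≤ alphaC N xi p₁ q₁ x := by
  have hq₁ : 0 ≤ q₁ := hq₂.trans hq
  have hN_le : N q₂ xi ≤ N q₁ xi :=
    monotoneOn_Ici_of_pd1_nonneg hN (fun u hu => hH.pd1_nonneg hu) hq₂ hq₁ hq
  have hpd1_le : pd1 N q₂ xi ≤ pd1 N q₁ xi := hH.monotoneOn_pd1 hq₂ hq₁ hq
  have hpd2_le : pd2 N q₂ xi ≤ pd2 N q₁ xi := hH.monotoneOn_pd2 hq₂ hq₁ hq
  have hpd1_nonneg : 0 ≤ pd1 N q₁ xi := hH.pd1_nonneg hq₁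
  unfold alphaC
  gcongr

theorem alphaC_nonneg (hH : FirstOrderHypH N xi) (hN : Differentiable ℝ fun q => N q xi)
    {p q x : ℝ} (hp : 0 ≤ p) (hq : 0 ≤ q) (hx : xi ≤ x) : 0 ≤ alphaC N xi p q x :=
  calc 0 ≤ pd2 N 0 xi * (x - xi) + N 0 xi :=
        add_nonneg (mul_nonneg hH.pd2_nonneg_zero (sub_nonneg.2 hx)) hH.nonneg_zero
    _ = alphaC N xi 0 0 x := by simp [alphaC]
    _ ≤ alphaC N xi p q x := hH.alphaC_mono hN le_rfl hp le_rfl hq hx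

end FirstOrderHypH

theorem bddAbove_alphaC_image_Icc (N : ℝ → ℝ → ℝ) (xi p q s t : ℝ) :
    BddAbove (alphaC N xi p q '' Icc s t) :=
  isCompact_Icc.bddAbove_image (by unfold alphaC; fun_prop)

namespace Mesh

theorem pt_le_pt (m : Mesh) {i j : ℕ} (hij : i ≤ j) (hj : j ≤ m.n) : m.pt i ≤ m.pt j := by
  induction j, hij using Nat.le_induction with
  | base => exact le_rfl
  | succ j _ ih => exact (ih (by lia)).trans (m.mono j hj).le

theorem forall_mem_Icc_of_step (m : Mesh) {P : ℝ → Prop} (h_init : P (m.pt 0))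
    (h_step : ∀ i < m.n, P (m.pt i) → ∀ x ∈ Icc (m.pt i) (m.pt (i + 1)), P x) :
    ∀ x ∈ Icc (m.pt 0) (m.pt m.n), P x := by
  suffices h : ∀ k ≤ m.n, ∀ x ∈ Icc (m.pt 0) (m.pt k), P x from h m.n le_rfl
  intro k
  induction k with
  | zero =>
    intro _ x hx
    rwa [le_antisymm hx.2 hx.1]
  | succ k ih =>
    intro hk x hx
    have hprev := ih (Nat.le_of_succ_le hk)
    rcases le_total x (m.pt k) with hxk | hkx
    · exact hprev x ⟨hx.1, hxk⟩
    · exact h_step k hk (hprev _ (right_mem_Icc.2 (m.pt_le_pt k.zero_le (by lia)))) x ⟨hkx, hx.2⟩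

end Mesh

theorem IsStraightSol.cauchyDominatedAt {N : ℝ → ℝ → ℝ} {a c : ℝ} {m : Mesh}
    {u₁ u₁' u₂ u₂' : ℝ → ℝ} (h₁ : IsStraightSol N a c m u₁ u₁') (h₂ : IsStraightSol N a c m u₂ u₂')
    (hm₀ : m.pt 0 = a) (hmn : m.pt m.n = c) (hN : Differentiable ℝ (Function.uncurry N))
    (hH : ∀ x ∈ Ico a c, FirstOrderHypH N x) (h : CauchyDominatedAt u₂ u₂' u₁ u₁' a) :
    ∀ x ∈ Icc a c, CauchyDominatedAt u₂ u₂' u₁ u₁' x := by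
  subst hm₀ hmn
  refine m.forall_mem_Icc_of_step h fun i hi hdom => ?_
  have hle_left : m.pt 0 ≤ m.pt i := m.pt_le_pt i.zero_le hi.le
  have hle_right : m.pt (i + 1) ≤ m.pt m.n := m.pt_le_pt hi le_rfl
  have hsub : Icc (m.pt i) (m.pt (i + 1)) ⊆ Icc (m.pt 0) (m.pt m.n) :=
    Icc_subset_Icc hle_left hle_right
  have hHi : FirstOrderHypH N (m.pt i) := hH _ ⟨hle_left, (m.mono i hi).trans_le hle_right⟩
  have hNi : Differentiable ℝ fun q => N q (m.pt i) :=
    hN.comp (differentiable_id.prodMk (differentiable_const (m.pt i)))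
  exact hdom.of_linear_ode
    (fun x hx => (h₁.1 x (hsub hx)).mono hsub) (h₁.2.2 i hi)
    (fun x hx => (h₂.1 x (hsub hx)).mono hsub) (h₂.2.2 i hi)
    (fun x hx => hHi.alphaC_nonneg hNi hdom.slope_nonneg hdom.nonneg hx.1)
    (bddAbove_alphaC_image_Icc ..)
    (fun x hx => hHi.alphaC_mono hNi hdom.slope_nonneg hdom.slope_lt.le hdom.nonneg hdom.le hx.1)

theorem straight_scheme_monotone_in_slope_general {N : ℝ → ℝ → ℝ} {a c : ℝ}
    (hN : Differentiable ℝ (Function.uncurry N)) (hH : ∀ x ∈ Ico a c, FirstOrderHypH N x)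
    {m : Mesh} (hm₀ : m.pt 0 = a) (hmn : m.pt m.n = c) {u₁ u₁' u₂ u₂' : ℝ → ℝ}
    (h₁ : IsStraightSol N a c m u₁ u₁') (h₂ : IsStraightSol N a c m u₂ u₂')
    (ha : CauchyDominatedAt u₂ u₂' u₁ u₁' a) :
    (∀ x ∈ Ioc a c, u₂ x < u₁ x) ∧ (∀ x ∈ Icc a c, u₂' x < u₁' x) := by
  have hslope : ∀ x ∈ Icc a c, u₂' x < u₁' x := fun x hx =>
    (h₁.cauchyDominatedAt h₂ hm₀ hmn hN hH ha x hx).slope_lt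
  have hstrict : StrictMonoOn (fun x => u₁ x - u₂ x) (Icc a c) :=
    strictMonoOn_of_hasDerivWithinAt_pos (convex_Icc a c)
      (fun x hx => ((h₁.1 x hx).sub (h₂.1 x hx)).continuousWithinAt)
      (fun x hx => ((h₁.1 x (interior_subset hx)).sub (h₂.1 x (interior_subset hx))).mono
        interior_subset)
      (fun x hx => sub_pos.2 (hslope x (interior_subset hx)))
  refine ⟨fun x hx => sub_pos.1 ?_, hslope⟩
  have ha_mem : a ∈ Icc a c := left_mem_Icc.2 (hx.1.le.trans hx.2)
  exact (sub_nonneg.2 ha.le).trans_lt (hstrict ha_mem (Ioc_subset_Icc_self hx) hx.1)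

/-- monotonicity of the straight scheme solutions with respect to the
initial slope: if `ν > ν̄ ≥ 0` then `ũ_ν > ũ_ν̄` on `(a,c]` and `ũ_ν' > ũ_ν̄'` on `[a,c]`. -/
theorem straight_scheme_monotone_in_slope
    (a b c ub : ℝ) (hab : a < b) (hub : 0 < ub) (hc : c ∈ Ioo a b)
    (N : ℝ → ℝ → ℝ) (hN : ContDiff ℝ 2 (Function.uncurry N))
    (hH : HypH N a b)
    (ms : Mesh) (hms0 : ms.pt 0 = a) (hmsn : ms.pt ms.n = c)
    (nu₁ nu₂ : ℝ) (hnu₂ : 0 ≤ nu₂) (hnu : nu₂ < nu₁)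
    (u₁ u₁' u₂ u₂' : ℝ → ℝ)
    (h₁ : IsStraightSol N a c ms u₁ u₁') (h₁a : u₁ a = 0) (h₁d : u₁' a = nu₁)
    (h₂ : IsStraightSol N a c ms u₂ u₂') (h₂a : u₂ a = 0) (h₂d : u₂' a = nu₂) :
    (∀ x ∈ Ioc a c, u₂ x < u₁ x) ∧ (∀ x ∈ Icc a c, u₂' x < u₁' x) := by
  exact straight_scheme_monotone_in_slope_general (hN.differentiable two_ne_zero)
    (fun x hx => hH.firstOrderHypH hN ⟨hx.1, (hx.2.trans hc.2).le⟩) hms0 hmsn h₁ h₂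
    ⟨h₂a.ge, h₂d ▸ hnu₂, (h₂a.trans h₁a.symm).le, by rwa [h₁d, h₂d]⟩
end
end
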